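/- Define V₁₁(τ) := −e^{−πiτ/16}·μ(τ/4 + 1/2, τ/2; τ) and E₁(z) := η(8z)³. Then for every τ ∈ ℍ: V₁₁(τ) − (2τ+1)^{−1/2}·V₁₁(τ/(2τ+1)) = −(i/8)·∫_{1/2}^{i∞} E₁(u/32)/√(−i(u+τ)) du, where the integral is taken along the vertical path u = 1/2 + it, t ∈ (0, ∞), i.e., it equals −(i/8)·i·∫₀^∞ E₁((1/2+it)/32)/√(−i(1/2+it+τ)) dt. (This is the transformation of Theorem 1.2(i) for (m,n) = (1,1) on ℍ, where ζ₄^{ℓ₁} = ζ₄² = −1, c₁ = 8, and E₁(2u/c₁²) = E₁(u/32).) -/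

import Mathlib

open Complex

/-- The Dedekind eta function `η(τ) = e^{πiτ/12} ∏_{n≥1} (1 - e^{2πinτ})`. -/
noncomputable def dedekindEta (τ : ℂ) : ℂ :=
  Complex.exp ((Real.pi : ℂ) * I * τ / 12) *
    ∏' n : ℕ, (1 - Complex.exp (2 * (Real.pi : ℂ) * I * ((n : ℂ) + 1) * τ))

/-- Zwegers' Jacobi theta function. -/
noncomputable def jacobiThetaZw (v τ : ℂ) : ℂ :=
  ∑' n : ℤ, Complex.exp (2 * (Real.pi : ℂ) * I * ((n : ℂ) + 1/2) * (v + 1/2)) *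
    Complex.exp ((Real.pi : ℂ) * I * τ * ((n : ℂ) + 1/2) ^ 2)

/-- Zwegers' μ-function. -/
noncomputable def muZw (u v τ : ℂ) : ℂ :=
  Complex.exp ((Real.pi : ℂ) * I * u) / jacobiThetaZw v τ *
    ∑' n : ℤ, (-1 : ℂ) ^ n * Complex.exp (2 * (Real.pi : ℂ) * I * (n : ℂ) * v) *
      Complex.exp ((Real.pi : ℂ) * I * τ * (n : ℂ) * ((n : ℂ) + 1)) /
      (1 - Complex.exp (2 * (Real.pi : ℂ) * I * u) * Complex.exp (2 * (Real.pi : ℂ) * I * (n : ℂ) * τ))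

/-- `V₁₁(τ) = −e^{−πiτ/16} μ(τ/4 + 1/2, τ/2; τ)`. -/
noncomputable def V11 (τ : ℂ) : ℂ :=
  -Complex.exp (-(Real.pi : ℂ) * I * τ / 16) * muZw (τ/4 + 1/2) (τ/2) τ

/-- `E₁(z) = η(8z)³`. -/
noncomputable def E1fun (z : ℂ) : ℂ := dedekindEta (8 * z) ^ 3

/-!
The function `z ↦ A(u, z; τ) / ϑ(z; τ)`, with `A` an Appell sum, agrees with `μ` up to an
exponential factor.  Under `τ ↦ τ' = τ / (2τ + 1)` both `A` and its weight-one transform satisfy the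
same pair of inhomogeneous quasi-periodicity relations up to explicit Gaussians, and so does `ϑ`
times a combination of two Mordell integrals.  The difference of the three is an entire function
which is `1`-periodic and is multiplied by a constant under `z ↦ z + τ`; since `u` is not a lattice
point, it vanishes.  Hence the period function of `V₁₁` is a difference of Mordell integrals
`∫ e^{πiσy² - 2πzy} / cosh(πy) dy` with `σ = τ + 1/2`.

On the other side, `η³` is the theta series `∑ (-1)ⁿ (2n + 1) q^{(2n+1)²/8}`.  Inverting `η` on the
vertical line turns the factor `1 / √(t - iσ)` times each exponential into a Gaussian integral in
`y` by Lévy's formula, the series over `n` is then summed under the integral sign, and shifting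
contours by `±i/4` yields the same two Mordell integrals.
-/

open Filter Topology Set MeasureTheory

/-! ### The exponential `e^{πix}` -/

/-- The exponential `x ↦ e^{πix}`, the normalisation shared by all theta functions below. -/
noncomputable def ePi (x : ℂ) : ℂ := cexp (Real.pi * I * x)

section ePi

variable (x y : ℂ)

lemma ePi_add : ePi (x + y) = ePi x * ePi y := by
  simp only [ePi, mul_add, Complex.exp_add]

lemma ePi_neg : ePi (-x) = (ePi x)⁻¹ := by
  simp only [ePi, mul_neg, Complex.exp_neg]

lemma ePi_ne_zero : ePi x ≠ 0 := Complex.exp_ne_zero _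

lemma ePi_zero : ePi 0 = 1 := by simp [ePi]

lemma ePi_half : ePi (1 / 2) = I := by
  rw [ePi, mul_right_comm, mul_one_div, Complex.exp_pi_div_two_mul_I]

lemma ePi_one : ePi 1 = -1 := by rw [ePi, mul_one, Complex.exp_pi_mul_I]

lemma ePi_add_one : ePi (x + 1) = -ePi x := by rw [ePi_add, ePi_one, mul_neg_one]

lemma ePi_two_mul_intCast (n : ℤ) : ePi (2 * n) = 1 := by
  rw [ePi, ← Complex.exp_int_mul_two_pi_mul_I n]
  ring_nf

lemma ePi_intCast (n : ℤ) : ePi n = (-1) ^ n := by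
  rw [ePi, ← Complex.exp_pi_mul_I, ← Complex.exp_int_mul]
  ring_nf

lemma ePi_add_two_mul_intCast (n : ℤ) : ePi (x + 2 * n) = ePi x := by
  rw [ePi_add, ePi_two_mul_intCast, mul_one]

lemma ePi_pow (n : ℕ) : ePi x ^ n = ePi (n * x) := by
  rw [ePi, ← Complex.exp_nat_mul, ePi]
  ring_nf

lemma norm_ePi : ‖ePi x‖ = Real.exp (-(Real.pi * x.im)) := by
  simp [ePi, Complex.norm_exp]

lemma norm_ePi_ofReal (r : ℝ) : ‖ePi r‖ = 1 := by simp [norm_ePi]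

lemma norm_ePi_lt_one {x : ℂ} (hx : 0 < x.im) : ‖ePi x‖ < 1 := by
  rw [norm_ePi, Real.exp_lt_one_iff, neg_lt_zero]
  positivity

lemma differentiable_ePi : Differentiable ℂ ePi := by
  unfold ePi
  fun_prop

end ePi

/-! ### Gaussian binomials and the Jacobi triple product -/

section GaussBinom

variable {R : Type*}

/-- The Gaussian binomial coefficient `[M choose j]_q`, by its Pascal recursion. -/
def gaussBinom [CommSemiring R] (q : R) : ℕ → ℕ → R
  | _, 0 => 1
  | 0, _ + 1 => 0
  | M + 1, j + 1 => gaussBinom q M j + q ^ (j + 1) * gaussBinom q M (j + 1)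

/-- The finite `q`-Pochhammer symbol `(q; q)_m = (1 - q) ⋯ (1 - q ^ m)`. -/
def qFactorial [CommRing R] (q : R) (m : ℕ) : R := ∏ k ∈ Finset.range m, (1 - q ^ (k + 1))

lemma gaussBinom_zero_right [CommSemiring R] (q : R) (M : ℕ) : gaussBinom q M 0 = 1 := by
  cases M <;> rfl

lemma gaussBinom_eq_zero_of_lt [CommSemiring R] (q : R) :
    ∀ {M j : ℕ}, M < j → gaussBinom q M j = 0
  | 0, _ + 1, _ => rfl
  | M + 1, j + 1, h => by
    rw [gaussBinom, gaussBinom_eq_zero_of_lt q (by lia : M < j),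
      gaussBinom_eq_zero_of_lt q (by lia : M < j + 1), mul_zero, add_zero]

lemma gaussBinom_self [CommSemiring R] (q : R) : ∀ M : ℕ, gaussBinom q M M = 1
  | 0 => rfl
  | M + 1 => by
    rw [gaussBinom, gaussBinom_self q M, gaussBinom_eq_zero_of_lt q M.lt_succ_self, mul_zero,
      add_zero]

lemma qFactorial_succ [CommRing R] (q : R) (m : ℕ) :
    qFactorial q (m + 1) = qFactorial q m * (1 - q ^ (m + 1)) :=
  Finset.prod_range_succ _ _

lemma gaussBinom_mul_qFactorial [CommRing R] (q : R) : ∀ j k : ℕ,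
    gaussBinom q (j + k) j * (qFactorial q j * qFactorial q k) = qFactorial q (j + k)
  | 0, k => by simp [gaussBinom_zero_right, qFactorial]
  | j + 1, 0 => by simp [gaussBinom_self, qFactorial]
  | j + 1, k + 1 => by
    have pascal : gaussBinom q (j + 1 + (k + 1)) (j + 1) =
        gaussBinom q (j + (k + 1)) j + q ^ (j + 1) * gaussBinom q (j + 1 + k) (j + 1) := by
      rw [show j + 1 + (k + 1) = j + k + 1 + 1 by ring, gaussBinom,
        show j + (k + 1) = j + k + 1 by ring, show j + 1 + k = j + k + 1 by ring]
    have ih_left := gaussBinom_mul_qFactorial q j (k + 1)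
    have ih_right := gaussBinom_mul_qFactorial q (j + 1) k
    rw [show j + (k + 1) = j + k + 1 by ring, qFactorial_succ q k] at ih_left
    rw [show j + 1 + k = j + k + 1 by ring, qFactorial_succ q j] at ih_right
    rw [pascal, show j + 1 + (k + 1) = j + k + 1 + 1 by ring, qFactorial_succ q (j + k + 1),
      show j + (k + 1) = j + k + 1 by ring, show j + 1 + k = j + k + 1 by ring,
      qFactorial_succ q j, qFactorial_succ q k]
    linear_combination (1 - q ^ (j + 1)) * ih_left +
      q ^ (j + 1) * (1 - q ^ (k + 1)) * ih_right

lemma prod_one_add_mul_pow [CommSemiring R] (q : R) (M : ℕ) (x : R) :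
    ∏ k ∈ Finset.range M, (1 + x * q ^ k) =
      ∑ j ∈ Finset.range (M + 1), gaussBinom q M j * q ^ j.choose 2 * x ^ j := by
  induction M generalizing x with
  | zero => simp [gaussBinom]
  | succ M ih =>
    have shift : ∏ k ∈ Finset.range M, (1 + x * q ^ (k + 1)) =
        ∏ k ∈ Finset.range M, (1 + x * q * q ^ k) :=
      Finset.prod_congr rfl fun k _ => by ring
    have pascal (j : ℕ) : gaussBinom q (M + 1) (j + 1) * q ^ (j + 1).choose 2 * x ^ (j + 1) =
        gaussBinom q M j * q ^ j.choose 2 * (x * q) ^ j * x +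
          gaussBinom q M (j + 1) * q ^ (j + 1).choose 2 * (x * q) ^ (j + 1) := by
      have hchoose : (j + 1).choose 2 = j.choose 2 + j := by
        rw [Nat.choose_succ_succ' j 1, Nat.choose_one_right, add_comm]
      rw [gaussBinom, hchoose]
      ring
    have reindex : ∑ j ∈ Finset.range (M + 1),
          gaussBinom q M (j + 1) * q ^ (j + 1).choose 2 * (x * q) ^ (j + 1) + 1 =
        ∑ j ∈ Finset.range (M + 1), gaussBinom q M j * q ^ j.choose 2 * (x * q) ^ j := by
      have h := Finset.sum_range_succ' (fun j => gaussBinom q M j * q ^ j.choose 2 * (x * q) ^ j)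
        (M + 1)
      rw [Finset.sum_range_succ, gaussBinom_eq_zero_of_lt q M.lt_succ_self] at h
      simpa [gaussBinom_zero_right] using h.symm
    rw [Finset.prod_range_succ', shift, ih, Finset.sum_range_succ' _ (M + 1)]
    simp_rw [pascal, Finset.sum_add_distrib, ← Finset.sum_mul]
    simp only [gaussBinom_zero_right, Nat.choose_zero_succ, pow_zero, mul_one, add_assoc, reindex]
    ring

end GaussBinom

section Limits

variable {q : ℂ}

lemma one_sub_pow_succ_ne_zero (hq : ‖q‖ < 1) (n : ℕ) : 1 - q ^ (n + 1) ≠ 0 := fun h => by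
  have hlt : ‖q ^ (n + 1)‖ < 1 := by
    rw [norm_pow]
    exact pow_lt_one₀ (norm_nonneg _) hq n.succ_ne_zero
  rw [← sub_eq_zero.mp h, norm_one] at hlt
  exact hlt.false

lemma qFactorial_ne_zero (hq : ‖q‖ < 1) (n : ℕ) : qFactorial q n ≠ 0 :=
  Finset.prod_ne_zero_iff.mpr fun k _ => one_sub_pow_succ_ne_zero hq k

lemma tendsto_qFactorial (hq : ‖q‖ < 1) :
    Tendsto (qFactorial q) atTop (𝓝 (∏' n : ℕ, (1 - q ^ (n + 1)))) :=
  (ModularForm.multipliable_one_sub_pow hq).hasProd.tendsto_prod_nat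

lemma tprod_one_sub_pow_ne_zero (hq : ‖q‖ < 1) : ∏' n : ℕ, (1 - q ^ (n + 1)) ≠ 0 := by
  have hsum : Summable fun n : ℕ => ‖-q ^ (n + 1)‖ := by
    simpa using (summable_nat_add_iff 1).mpr (summable_geometric_of_lt_one (norm_nonneg _) hq)
  simpa [sub_eq_add_neg] using tprod_one_add_ne_zero_of_summable
    (fun n => by simpa [sub_eq_add_neg] using one_sub_pow_succ_ne_zero hq n) hsum

lemma gaussBinom_eq_div (hq : ‖q‖ < 1) (j k : ℕ) :
    gaussBinom q (j + k) j = qFactorial q (j + k) * (qFactorial q j)⁻¹ * (qFactorial q k)⁻¹ := by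
  have hj := qFactorial_ne_zero hq j
  have hk := qFactorial_ne_zero hq k
  rw [← gaussBinom_mul_qFactorial]
  field_simp

lemma exists_norm_gaussBinom_le (hq : ‖q‖ < 1) :
    ∃ B : ℝ, ∀ j k, ‖gaussBinom q (j + k) j‖ ≤ B := by
  have hlim := tendsto_qFactorial hq
  obtain ⟨B₁, h₁⟩ := hlim.norm.bddAbove_range
  obtain ⟨B₂, h₂⟩ := (hlim.inv₀ (tprod_one_sub_pow_ne_zero hq)).norm.bddAbove_range
  have hB₁ (n : ℕ) : ‖qFactorial q n‖ ≤ B₁ := h₁ ⟨n, rfl⟩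
  have hB₂ (n : ℕ) : ‖(qFactorial q n)⁻¹‖ ≤ B₂ := h₂ ⟨n, rfl⟩
  have hB₁_nonneg := (norm_nonneg _).trans (hB₁ 0)
  have hB₂_nonneg := (norm_nonneg _).trans (hB₂ 0)
  refine ⟨B₁ * B₂ * B₂, fun j k => ?_⟩
  rw [gaussBinom_eq_div hq, norm_mul, norm_mul]
  gcongr
  exacts [hB₁ _, hB₂ _, hB₂ _]

lemma tendsto_gaussBinom (hq : ‖q‖ < 1) {j k : ℕ → ℕ} (hj : Tendsto j atTop atTop)
    (hk : Tendsto k atTop atTop) :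
    Tendsto (fun N => gaussBinom q (j N + k N) (j N)) atTop
      (𝓝 (∏' n : ℕ, (1 - q ^ (n + 1)))⁻¹) := by
  have hne := tprod_one_sub_pow_ne_zero hq
  have hlim := tendsto_qFactorial hq
  simpa [gaussBinom_eq_div hq, hne, Function.comp_def] using
    ((hlim.comp (hj.atTop_add_atTop hk)).mul ((hlim.inv₀ hne).comp hj)).mul
      ((hlim.inv₀ hne).comp hk)

/-- The central Gaussian binomial `[2N choose N + n]_q`, extended by zero to all `n : ℤ`. -/
noncomputable def centralGaussBinom (q : ℂ) (N : ℕ) (n : ℤ) : ℂ :=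
  if n.natAbs ≤ N then gaussBinom q (2 * N) (N + n).toNat else 0

lemma sum_gaussBinom_mul_eq_tsum (q : ℂ) (N : ℕ) (a : ℤ → ℂ) :
    ∑ j ∈ Finset.range (2 * N + 1), gaussBinom q (2 * N) j * a (j - N) =
      ∑' n : ℤ, centralGaussBinom q N n * a n := by
  rw [tsum_eq_sum (s := Finset.Icc (-N : ℤ) N)]
  · refine Finset.sum_bij' (fun j _ => (j : ℤ) - N) (fun n _ => (N + n).toNat) ?_ ?_ ?_ ?_ ?_
    · intro j hj
      rw [Finset.mem_range] at hj
      rw [Finset.mem_Icc]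
      lia
    · intro n hn
      rw [Finset.mem_Icc] at hn
      rw [Finset.mem_range]
      lia
    · intro j _
      lia
    · intro n hn
      rw [Finset.mem_Icc] at hn
      lia
    · intro j hj
      rw [Finset.mem_range] at hj
      rw [centralGaussBinom, if_pos (by lia), show ((N : ℤ) + (j - N)).toNat = j by lia]
  · intro n hn
    rw [Finset.mem_Icc] at hn
    rw [centralGaussBinom, if_neg (by lia), zero_mul]

lemma centralGaussBinom_of_le (q : ℂ) {N : ℕ} {n : ℤ} (h : n.natAbs ≤ N) :
    centralGaussBinom q N n =
      gaussBinom q ((N + n).toNat + (N - n).toNat) (N + n).toNat := by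
  rw [centralGaussBinom, if_pos h, show (N + n).toNat + (N - n).toNat = 2 * N by lia]

lemma tendsto_sum_gaussBinom_mul (hq : ‖q‖ < 1) {a : ℤ → ℂ} (ha : Summable a) :
    Tendsto (fun N : ℕ => ∑ j ∈ Finset.range (2 * N + 1), gaussBinom q (2 * N) j * a (j - N))
      atTop (𝓝 ((∏' n : ℕ, (1 - q ^ (n + 1)))⁻¹ * ∑' n, a n)) := by
  obtain ⟨B, hB⟩ := exists_norm_gaussBinom_le hq
  simp_rw [sum_gaussBinom_mul_eq_tsum, ← tsum_mul_left]
  refine tendsto_tsum_of_dominated_convergence (ha.norm.mul_left B) (fun n => ?_)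
    (Eventually.of_forall fun N n => ?_)
  · have htop (m : ℤ) : Tendsto (fun N : ℕ => (N + m).toNat) atTop atTop :=
      tendsto_atTop_mono (fun N => show N - m.natAbs ≤ (N + m).toNat by lia)
        (tendsto_sub_atTop_nat _)
    refine ((tendsto_gaussBinom hq (htop n) (htop (-n))).mul_const (a n)).congr' ?_
    filter_upwards [eventually_ge_atTop n.natAbs] with N hN
    rw [centralGaussBinom_of_le q hN, sub_eq_add_neg]
  · rw [norm_mul]
    gcongr
    by_cases h : n.natAbs ≤ N
    · exact centralGaussBinom_of_le q h ▸ hB _ _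
    · rw [centralGaussBinom, if_neg h, norm_zero]
      exact (norm_nonneg _).trans (hB 0 0)

end Limits

section TripleProduct

lemma jacobiTheta₂_term_eq_ePi (n : ℤ) (z τ : ℂ) :
    jacobiTheta₂_term n z τ = ePi (2 * n * z + n ^ 2 * τ) := by
  rw [jacobiTheta₂_term, ePi]
  ring_nf

/-- The `N`-th partial product
`∏_{k < N} (1 + e^{πi(2z + (2k+1)τ)}) (1 + e^{πi(-2z + (2k+1)τ)})` of the Jacobi triple product. -/
noncomputable def tripleProduct (N : ℕ) (z τ : ℂ) : ℂ :=
  ∏ k ∈ Finset.range N,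
    (1 + ePi (2 * z + (2 * k + 1) * τ)) * (1 + ePi (-2 * z + (2 * k + 1) * τ))

lemma prod_one_add_ePi_sub (N : ℕ) (z τ : ℂ) :
    ∏ k ∈ Finset.range N, (1 + ePi (2 * z - (2 * k + 1) * τ)) =
      ePi (2 * N * z - N ^ 2 * τ) *
        ∏ k ∈ Finset.range N, (1 + ePi (-2 * z + (2 * k + 1) * τ)) := by
  induction N with
  | zero => simp [ePi_zero]
  | succ N ih =>
    have hinv : ePi (2 * z - (2 * N + 1) * τ) * ePi (-2 * z + (2 * N + 1) * τ) = 1 := by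
      rw [← ePi_add, ← ePi_zero]
      ring_nf
    have hsucc : ePi (2 * (N + 1 : ℕ) * z - (N + 1 : ℕ) ^ 2 * τ) =
        ePi (2 * N * z - N ^ 2 * τ) * ePi (2 * z - (2 * N + 1) * τ) := by
      rw [← ePi_add]
      push_cast
      ring_nf
    rw [Finset.prod_range_succ, ih, Finset.prod_range_succ, hsucc]
    linear_combination (ePi (2 * N * z - N ^ 2 * τ) *
      ∏ k ∈ Finset.range N, (1 + ePi (-2 * z + (2 * k + 1) * τ))) * -hinv

lemma tripleProduct_eq_sum (N : ℕ) (z τ : ℂ) :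
    tripleProduct N z τ = ∑ j ∈ Finset.range (2 * N + 1),
      gaussBinom (ePi (2 * τ)) (2 * N) j * jacobiTheta₂_term (j - N) z τ := by
  have expand := prod_one_add_mul_pow (ePi (2 * τ)) (2 * N) (ePi (2 * z - (2 * N - 1) * τ))
  have factor (k : ℕ) : ePi (2 * z - (2 * N - 1) * τ) * ePi (2 * τ) ^ k =
      ePi (2 * z + (2 * (k - N) + 1) * τ) := by
    rw [ePi_pow, ← ePi_add]
    ring_nf
  have lower : ∏ k ∈ Finset.range N, (1 + ePi (2 * z + (2 * ((k : ℂ) - N) + 1) * τ)) =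
      ∏ k ∈ Finset.range N, (1 + ePi (2 * z - (2 * k + 1) * τ)) := by
    rw [← Finset.prod_range_reflect]
    refine Finset.prod_congr rfl fun k hk => ?_
    have hk' : k + 1 ≤ N := Finset.mem_range.mp hk
    rw [show N - 1 - k = N - (k + 1) by lia, Nat.cast_sub hk']
    push_cast
    ring_nf
  simp_rw [factor] at expand
  rw [two_mul, Finset.prod_range_add, ← two_mul, lower, prod_one_add_ePi_sub] at expand
  rw [← mul_right_inj' (ePi_ne_zero (2 * N * z - N ^ 2 * τ)), tripleProduct,
    Finset.prod_mul_distrib, mul_comm (∏ k ∈ Finset.range N, _), ← mul_assoc, Finset.mul_sum]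
  convert! expand using 2 with j
  · refine Finset.prod_congr rfl fun k _ => ?_
    push_cast
    ring_nf
  · rw [mul_left_comm, mul_assoc (gaussBinom _ _ _), jacobiTheta₂_term_eq_ePi, ePi_pow, ePi_pow,
      ← ePi_add, ← ePi_add, Nat.cast_choose_two]
    push_cast
    ring_nf

variable {τ : ℂ} (hτ : 0 < τ.im)

include hτ

lemma norm_ePi_two_mul_lt_one : ‖ePi (2 * τ)‖ < 1 :=
  norm_ePi_lt_one (by simpa using hτ)

lemma tendsto_tripleProduct (z : ℂ) :
    Tendsto (fun N => tripleProduct N z τ) atTop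
      (𝓝 ((∏' n : ℕ, (1 - ePi (2 * τ) ^ (n + 1)))⁻¹ * jacobiTheta₂ z τ)) := by
  simp_rw [tripleProduct_eq_sum]
  exact_mod_cast tendsto_sum_gaussBinom_mul (norm_ePi_two_mul_lt_one hτ)
    ((summable_jacobiTheta₂_term_iff z τ).mpr hτ)

lemma summable_norm_ePi_odd : Summable fun k : ℕ => ‖-ePi ((2 * k + 1) * τ)‖ := by
  have h := (summable_geometric_of_lt_one (norm_nonneg _)
    (norm_ePi_two_mul_lt_one hτ)).mul_left ‖ePi τ‖
  refine h.congr fun k => ?_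
  rw [norm_neg, ← norm_pow, ← norm_mul, ePi_pow, ← ePi_add]
  ring_nf

theorem jacobiTheta₂_one_half_ne_zero : jacobiTheta₂ (1 / 2) τ ≠ 0 := by
  have hfactor (k : ℕ) : 1 + -ePi ((2 * k + 1) * τ) ≠ 0 := by
    rw [← sub_eq_add_neg, sub_ne_zero]
    intro h
    have him : 0 < ((2 * k + 1) * τ).im := by
      have : ((2 * k + 1) * τ).im = (2 * k + 1) * τ.im := by simp
      rw [this]
      positivity
    simpa [← h] using norm_ePi_lt_one him
  have hterm (k : ℕ) : (1 + ePi (2 * (1 / 2) + (2 * k + 1) * τ)) *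
      (1 + ePi (-2 * (1 / 2) + (2 * k + 1) * τ)) = (1 + -ePi ((2 * k + 1) * τ)) ^ 2 := by
    rw [ePi_add, ePi_add, show (-2 * (1 / 2) : ℂ) = -1 by ring, show (2 * (1 / 2) : ℂ) = 1 by ring,
      ePi_neg, ePi_one]
    ring
  have hsum := summable_norm_ePi_odd hτ
  have hlim := (multipliable_one_add_of_summable hsum).hasProd.tendsto_prod_nat.pow 2
  simp_rw [← Finset.prod_pow, ← hterm] at hlim
  have heq := tendsto_nhds_unique hlim (tendsto_tripleProduct hτ (1 / 2))
  intro hzero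
  rw [hzero, mul_zero] at heq
  exact pow_ne_zero 2 (tprod_one_add_ne_zero_of_summable hfactor hsum) heq

omit hτ in
lemma hasDerivAt_jacobiTheta₂_term (n : ℤ) (z τ : ℂ) :
    HasDerivAt (fun w => jacobiTheta₂_term n w τ) (jacobiTheta₂'_term n z τ) z := by
  have h := ((((hasDerivAt_id z).const_mul (2 * Real.pi * I * n)).add_const
    (Real.pi * I * n ^ 2 * τ))).cexp
  rw [jacobiTheta₂'_term, jacobiTheta₂_term]
  convert! h using 1
  simp only [id, mul_one]
  ring

omit hτ in
lemma hasDerivAt_ePi_neg_two_mul_add (z c : ℂ) :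
    HasDerivAt (fun w => 1 + ePi (-2 * w + c)) (-2 * (Real.pi * I) * ePi (-2 * z + c)) z := by
  have h := ((((hasDerivAt_id z).const_mul (-2)).add_const c).const_mul (Real.pi * I)).cexp
  convert! h.const_add 1 using 1
  simp only [ePi, id]
  ring

omit hτ in
/-- At `z = (1 + τ) / 2` the factor `1 + e^{πi(-2z + τ)}` vanishes, so only its derivative
contributes. -/
lemma hasDerivAt_tripleProduct_one_add_div_two (N : ℕ) (τ : ℂ) :
    HasDerivAt (fun z => tripleProduct (N + 1) z τ)
      (2 * Real.pi * I * (qFactorial (ePi (2 * τ)) (N + 1) * qFactorial (ePi (2 * τ)) N))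
      ((1 + τ) / 2) := by
  set g : ℂ → ℂ := fun z => (∏ k ∈ Finset.range (N + 1), (1 + ePi (2 * z + (2 * k + 1) * τ))) *
    ∏ k ∈ Finset.range N, (1 + ePi (-2 * z + (2 * (k + 1 : ℕ) + 1) * τ)) with hg
  have hsplit : (fun z => tripleProduct (N + 1) z τ) = fun z => (1 + ePi (-2 * z + τ)) * g z := by
    funext z
    rw [tripleProduct, Finset.prod_mul_distrib,
      Finset.prod_range_succ' (fun k : ℕ => 1 + ePi (-2 * z + (2 * k + 1) * τ)), hg]
    simp only [CharP.cast_eq_zero, mul_zero, zero_add, one_mul]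
    ring
  have hdiff : DifferentiableAt ℂ g ((1 + τ) / 2) := by
    have := differentiable_ePi
    fun_prop
  have hvalue : g ((1 + τ) / 2) =
      qFactorial (ePi (2 * τ)) (N + 1) * qFactorial (ePi (2 * τ)) N := by
    rw [hg, qFactorial, qFactorial]
    refine congr_arg₂ (· * ·) (Finset.prod_congr rfl fun k _ => ?_)
      (Finset.prod_congr rfl fun k _ => ?_)
    · rw [ePi_pow, sub_eq_add_neg, ← ePi_add_one]
      push_cast
      ring_nf
    · rw [ePi_pow, sub_eq_add_neg, ← ePi_add_one,
        ← ePi_add_two_mul_intCast (-2 * ((1 + τ) / 2) + _) 1]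
      push_cast
      ring_nf
  have hvanish : ePi (-2 * ((1 + τ) / 2) + τ) = -1 := by
    rw [show -2 * ((1 + τ) / 2) + τ = -1 by ring, ePi_neg, ePi_one]
    norm_num
  have h := (hasDerivAt_ePi_neg_two_mul_add ((1 + τ) / 2) τ).mul hdiff.hasDerivAt
  rw [hsplit]
  convert! h using 1
  rw [hvanish, hvalue]
  ring

theorem jacobiTheta₂'_one_add_div_two :
    jacobiTheta₂' ((1 + τ) / 2) τ =
      2 * Real.pi * I * (∏' n : ℕ, (1 - ePi (2 * τ) ^ (n + 1))) ^ 3 := by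
  set P := ∏' n : ℕ, (1 - ePi (2 * τ) ^ (n + 1))
  have hq := norm_ePi_two_mul_lt_one hτ
  have hfinite (N : ℕ) : ∑ j ∈ Finset.range (2 * (N + 1) + 1),
      gaussBinom (ePi (2 * τ)) (2 * (N + 1)) j *
        jacobiTheta₂'_term (j - (N + 1 : ℕ)) ((1 + τ) / 2) τ =
      2 * Real.pi * I * (qFactorial (ePi (2 * τ)) (N + 1) * qFactorial (ePi (2 * τ)) N) := by
    refine HasDerivAt.unique ?_ (hasDerivAt_tripleProduct_one_add_div_two N τ)
    simp_rw [tripleProduct_eq_sum]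
    exact HasDerivAt.fun_sum fun j _ => (hasDerivAt_jacobiTheta₂_term _ _ _).const_mul _
  have hsum := (tendsto_sum_gaussBinom_mul hq
    ((summable_jacobiTheta₂'_term_iff ((1 + τ) / 2) τ).mpr hτ)).comp (tendsto_add_atTop_nat 1)
  have hprod := ((((tendsto_qFactorial hq).comp (tendsto_add_atTop_nat 1)).mul
    (tendsto_qFactorial hq)).const_mul (2 * Real.pi * I))
  have heq : P⁻¹ * jacobiTheta₂' ((1 + τ) / 2) τ = 2 * Real.pi * I * (P * P) :=
    tendsto_nhds_unique (hsum.congr hfinite) hprod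
  have hPne : P ≠ 0 := tprod_one_sub_pow_ne_zero hq
  rw [inv_mul_eq_iff_eq_mul₀ hPne] at heq
  rw [heq]
  ring

end TripleProduct

/-! ### The cube of the eta function -/

section EtaCube

lemma dedekindEta_eq_ePi_mul (w : ℂ) :
    dedekindEta w = ePi (w / 12) * ∏' n : ℕ, (1 - ePi (2 * w) ^ (n + 1)) := by
  rw [dedekindEta, ePi, mul_div_assoc]
  congr 1
  refine tprod_congr fun n => ?_
  rw [ePi_pow, ePi]
  push_cast
  ring_nf

lemma jacobiTheta₂'_term_one_add_div_two (n : ℤ) (w : ℂ) :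
    jacobiTheta₂'_term n ((1 + w) / 2) w =
      2 * Real.pi * I * ((-1) ^ n * n * ePi ((n ^ 2 + n) * w)) := by
  have hexp : ePi (2 * n * ((1 + w) / 2) + n ^ 2 * w) = (-1) ^ n * ePi ((n ^ 2 + n) * w) := by
    rw [← ePi_intCast, ← ePi_add]
    ring_nf
  rw [jacobiTheta₂'_term, jacobiTheta₂_term_eq_ePi, hexp]
  ring

lemma jacobiTheta₂'_term_one_add_div_two_neg (k : ℕ) (w : ℂ) :
    jacobiTheta₂'_term (-(k + 1)) ((1 + w) / 2) w =
      2 * Real.pi * I * ((-1) ^ k * (k + 1) * ePi ((k ^ 2 + k) * w)) := by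
  have hsign : (-1 : ℂ) ^ (-((k : ℤ) + 1)) = -(-1) ^ k := by
    rw [zpow_neg, zpow_add_one₀ (by simp), zpow_natCast, mul_inv, ← inv_pow]
    norm_num
  rw [jacobiTheta₂'_term_one_add_div_two, hsign]
  push_cast
  ring_nf

lemma jacobiTheta₂'_one_add_div_two_eq_tsum {w : ℂ} (hw : 0 < w.im) :
    jacobiTheta₂' ((1 + w) / 2) w =
      2 * Real.pi * I * ∑' k : ℕ, (-1) ^ k * (2 * (k : ℂ) + 1) * ePi ((k ^ 2 + k) * w) := by
  have hsum := hasSum_jacobiTheta₂'_term ((1 + w) / 2) hw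
  rw [← hsum.nat_add_neg_add_one.tsum_eq, ← tsum_mul_left]
  refine tsum_congr fun k => ?_
  rw [jacobiTheta₂'_term_one_add_div_two_neg, jacobiTheta₂'_term_one_add_div_two,
    zpow_natCast, Int.cast_natCast]
  ring

theorem dedekindEta_cube_eq_tsum {w : ℂ} (hw : 0 < w.im) :
    dedekindEta w ^ 3 =
      ∑' k : ℕ, (-1) ^ k * (2 * (k : ℂ) + 1) * ePi ((2 * k + 1) ^ 2 * w / 4) := by
  have h := (jacobiTheta₂'_one_add_div_two hw).symm.trans (jacobiTheta₂'_one_add_div_two_eq_tsum hw)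
  rw [mul_right_inj' Complex.two_pi_I_ne_zero] at h
  rw [dedekindEta_eq_ePi_mul, mul_pow, h, ← tsum_mul_left, ePi_pow]
  refine tsum_congr fun k => ?_
  rw [mul_left_comm, ← ePi_add]
  push_cast
  ring_nf

lemma dedekindEta_add_eight_cube (w : ℂ) : dedekindEta (w + 8) ^ 3 = dedekindEta w ^ 3 := by
  have h₁ : ePi (2 * (w + 8)) = ePi (2 * w) := by
    rw [← ePi_add_two_mul_intCast (2 * w) 8]
    push_cast
    ring_nf
  have h₂ : ePi ((w + 8) / 12) ^ 3 = ePi (w / 12) ^ 3 := by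
    rw [ePi_pow, ePi_pow, ← ePi_add_two_mul_intCast (_ * (w / 12)) 1]
    push_cast
    ring_nf
  rw [dedekindEta_eq_ePi_mul, dedekindEta_eq_ePi_mul, mul_pow, mul_pow, h₁, h₂]

lemma dedekindEta_eq_eta (w : ℂ) : dedekindEta w = ModularForm.eta w := by
  rw [dedekindEta, ModularForm.eta]
  simp_rw [ModularForm.eta_q_eq_cexp, Function.Periodic.qParam]
  push_cast
  ring_nf

lemma dedekindEta_neg_one_div {w : ℂ} (hw : 0 < w.im) :
    dedekindEta (-1 / w) = (I ^ (1 / 2 : ℂ))⁻¹ * (w ^ (1 / 2 : ℂ) * dedekindEta w) := by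
  rw [dedekindEta_eq_eta, dedekindEta_eq_eta]
  simpa [Complex.sqrt] using ModularForm.eta_comp_eq_csqrt_I_inv hw

end EtaCube

/-! ### Square roots -/

lemma ne_zero_of_im_pos {x : ℂ} (hx : 0 < x.im) : x ≠ 0 := fun h => by simp [h] at hx

lemma arg_mem_Ioo_of_im_pos {x : ℂ} (hx : 0 < x.im) : arg x ∈ Ioo 0 Real.pi :=
  ⟨(arg_nonneg_iff.2 hx.le).lt_of_ne fun h => hx.ne' (arg_eq_zero_iff.1 h.symm).2,
    arg_lt_pi_iff.2 (Or.inr hx.ne')⟩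

lemma mul_cpow_of_arg_add_mem {x y : ℂ} (hx : x ≠ 0) (hy : y ≠ 0)
    (h : arg x + arg y ∈ Ioc (-Real.pi) Real.pi) (r : ℂ) : (x * y) ^ r = x ^ r * y ^ r := by
  rw [cpow_def_of_ne_zero (mul_ne_zero hx hy), cpow_def_of_ne_zero hx, cpow_def_of_ne_zero hy,
    (log_mul_eq_add_log_iff hx hy).2 h, add_mul, Complex.exp_add]

lemma mul_cpow_of_im_pos {x y : ℂ} (hx : 0 < x.im) (hy : 0 < y.im) (hxy : 0 < (x * y).im) (r : ℂ) :
    (x * y) ^ r = x ^ r * y ^ r := by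
  obtain ⟨hx1, hx2⟩ := arg_mem_Ioo_of_im_pos hx
  obtain ⟨hy1, hy2⟩ := arg_mem_Ioo_of_im_pos hy
  have hsin : (x * y).im = ‖x‖ * ‖y‖ * Real.sin (arg x + arg y) := by
    rw [mul_im, Real.sin_add, ← norm_mul_cos_arg x, ← norm_mul_sin_arg x, ← norm_mul_cos_arg y,
      ← norm_mul_sin_arg y]
    ring
  have hlt : arg x + arg y < Real.pi := by
    by_contra! h
    have hneg := Real.sin_nonpos_of_nonpos_of_neg_pi_le (x := arg x + arg y - 2 * Real.pi)
      (by linarith) (by linarith)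
    rw [Real.sin_sub_two_pi] at hneg
    exact hxy.not_ge (hsin ▸ mul_nonpos_of_nonneg_of_nonpos (by positivity) hneg)
  exact mul_cpow_of_arg_add_mem (ne_zero_of_im_pos hx) (ne_zero_of_im_pos hy)
    ⟨by linarith [Real.pi_pos], hlt.le⟩ r

lemma cpow_half_sq (x : ℂ) : (x ^ (1 / 2 : ℂ)) ^ 2 = x := by
  rw [one_div, ← Nat.cast_ofNat, cpow_nat_inv_pow x two_ne_zero]

lemma cpow_half_ne_zero {x : ℂ} (hx : x ≠ 0) : x ^ (1 / 2 : ℂ) ≠ 0 :=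
  fun h => hx <| by rw [← cpow_half_sq x, h, zero_pow two_ne_zero]

lemma I_cpow_half : I ^ (1 / 2 : ℂ) = ePi (1 / 4) := by
  rw [cpow_def_of_ne_zero I_ne_zero, log_I, ePi]
  ring_nf

lemma neg_I_cpow_half : (-I) ^ (1 / 2 : ℂ) = ePi (-(1 / 4)) := by
  rw [cpow_def_of_ne_zero (neg_ne_zero.2 I_ne_zero), log_neg_I, ePi]
  ring_nf

lemma ofReal_cpow_half {a : ℝ} (ha : 0 ≤ a) : (a : ℂ) ^ (1 / 2 : ℂ) = (√a : ℝ) := by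
  rw [Real.sqrt_eq_rpow, ofReal_cpow ha]
  norm_num

lemma ofReal_mul_cpow {a : ℝ} (ha : 0 < a) {x : ℂ} (hx : x ≠ 0) (r : ℂ) :
    (a * x) ^ r = (a : ℂ) ^ r * x ^ r :=
  mul_cpow_of_arg_add_mem (ofReal_ne_zero.2 ha.ne') hx
    (by rw [arg_ofReal_of_nonneg ha.le, zero_add]; exact arg_mem_Ioc x) r

lemma I_div_ofReal_cpow_half {a : ℝ} (ha : 0 < a) :
    (I / a) ^ (1 / 2 : ℂ) = ePi (1 / 4) / (√a : ℝ) := by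
  rw [show (I / a : ℂ) = (a⁻¹ : ℝ) * I by push_cast; ring, ofReal_mul_cpow (inv_pos.2 ha) I_ne_zero,
    ofReal_cpow_half (inv_nonneg.2 ha.le), I_cpow_half, Real.sqrt_inv, ofReal_inv, inv_mul_eq_div]

lemma neg_I_mul_cpow_half {σ : ℂ} (hσ : 0 < σ.im) :
    (-I * σ) ^ (1 / 2 : ℂ) = ePi (-(1 / 4)) * σ ^ (1 / 2 : ℂ) := by
  obtain ⟨h1, h2⟩ := arg_mem_Ioo_of_im_pos hσ
  rw [mul_cpow_of_arg_add_mem (neg_ne_zero.2 I_ne_zero) (ne_zero_of_im_pos hσ)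
    (by rw [arg_neg_I]; constructor <;> linarith), neg_I_cpow_half]

lemma dedekindEta_cube_line {t : ℝ} (ht : 0 < t) :
    dedekindEta ((1 / 2 + I * t) / 4) ^ 3 =
      (ePi (1 / 4) / (√(2 * t) : ℝ)) ^ 3 * dedekindEta (-(1 / 8) + I / (16 * t)) ^ 3 := by
  set w : ℂ := (1 / 2 + I * t) / 4 with hw
  set w' : ℂ := -(1 / 8) + I / (16 * t) with hw'
  have ht0 : (t : ℂ) ≠ 0 := ofReal_ne_zero.2 ht.ne'
  have hwim : 0 < w.im := by
    rw [show w = (1 / 8 : ℝ) + (t / 4 : ℝ) * I by rw [hw]; push_cast; ring]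
    simpa using ht
  have hwim' : 0 < w'.im := by
    rw [show w' = (-(1 / 8) : ℝ) + (1 / (16 * t) : ℝ) * I by rw [hw']; push_cast; ring]
    simpa using ht
  have hκim : 0 < (I / (2 * t : ℝ) : ℂ).im := by
    rw [div_ofReal_im, I_im]
    positivity
  have hκw : I / (2 * t : ℝ) * w = w' := by
    rw [hw, hw']
    push_cast
    field_simp
    linear_combination 256 * t * I_sq
  have hinv : -1 / w' = -1 / w + 8 := by
    have hw0 := ne_zero_of_im_pos hwim
    rw [div_add' _ _ _ hw0, div_eq_div_iff (ne_zero_of_im_pos hwim') hw0, hw, hw']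
    field_simp
    linear_combination -128 * t * I_sq
  have hroot : w' ^ (1 / 2 : ℂ) = ePi (1 / 4) / (√(2 * t) : ℝ) * w ^ (1 / 2 : ℂ) := by
    rw [← hκw, mul_cpow_of_im_pos hκim hwim (hκw ▸ hwim'), I_div_ofReal_cpow_half (by positivity)]
  have hcube : dedekindEta (-1 / w') ^ 3 = dedekindEta (-1 / w) ^ 3 := by
    rw [hinv, dedekindEta_add_eight_cube]
  rw [dedekindEta_neg_one_div hwim, dedekindEta_neg_one_div hwim', hroot] at hcube
  refine mul_left_cancel₀ (pow_ne_zero 3 <| mul_ne_zero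
    (inv_ne_zero (cpow_half_ne_zero I_ne_zero))
    (cpow_half_ne_zero (ne_zero_of_im_pos hwim))) ?_
  linear_combination -hcube

/-! ### Lévy's integral -/

section Levy

lemma integrableOn_and_integral_Ioi_of_hasDerivAt_of_nonneg {f f' : ℝ → ℝ} {a l m : ℝ}
    (hderiv : ∀ x ∈ Ioi a, HasDerivAt f (f' x) x) (hnonneg : ∀ x ∈ Ioi a, 0 ≤ f' x)
    (hl : Tendsto f (𝓝[>] a) (𝓝 l)) (hm : Tendsto f atTop (𝓝 m)) :
    IntegrableOn f' (Ioi a) ∧ ∫ x in Ioi a, f' x = m - l := by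
  have hne : ∀ x ∈ Ioi a, Function.update f a l x = f x :=
    fun x hx => Function.update_of_ne (ne_of_gt hx) _ _
  have hcont : ContinuousWithinAt (Function.update f a l) (Ici a) a := by
    rwa [continuousWithinAt_update_same, Ici_sdiff_left]
  have hderiv' : ∀ x ∈ Ioi a, HasDerivAt (Function.update f a l) (f' x) x := fun x hx =>
    (hderiv x hx).congr_of_eventuallyEq <| by
      filter_upwards [Ioi_mem_nhds hx] using hne
  have hm' : Tendsto (Function.update f a l) atTop (𝓝 m) := hm.congr' <| by
    filter_upwards [eventually_gt_atTop a] with x hx using (hne x hx).symm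
  refine ⟨integrableOn_Ioi_deriv_of_nonneg hcont hderiv' hnonneg hm', ?_⟩
  rw [integral_Ioi_of_hasDerivAt_of_nonneg hcont hderiv' hnonneg hm', Function.update_self]

/-- The tail `∫_x^∞ e^{-πw²} dw` of the normalised Gaussian, written as `1/2 - ∫_0^x` so that it
is visibly differentiable. -/
noncomputable def gaussianTail (x : ℝ) : ℝ :=
  1 / 2 - ∫ w in (0 : ℝ)..x, Real.exp (-Real.pi * w ^ 2)

lemma hasDerivAt_gaussianTail (x : ℝ) :
    HasDerivAt gaussianTail (-Real.exp (-Real.pi * x ^ 2)) x := by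
  have hc : Continuous fun w : ℝ => Real.exp (-Real.pi * w ^ 2) := by fun_prop
  exact (intervalIntegral.integral_hasDerivAt_right (hc.intervalIntegrable 0 x)
    (hc.stronglyMeasurableAtFilter _ _) hc.continuousAt).const_sub (1 / 2)

lemma tendsto_gaussianTail_atTop : Tendsto gaussianTail atTop (𝓝 0) := by
  have h := (intervalIntegral_tendsto_integral_Ioi 0
    (integrable_exp_neg_mul_sq Real.pi_pos).integrableOn tendsto_id).const_sub (1 / 2 : ℝ)
  rwa [integral_gaussian_Ioi, div_self Real.pi_ne_zero, Real.sqrt_one, sub_self] at h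

lemma gaussianTail_neg (x : ℝ) : gaussianTail (-x) = 1 - gaussianTail x := by
  have h := intervalIntegral.integral_comp_neg (a := 0) (b := x)
    fun w : ℝ => Real.exp (-Real.pi * w ^ 2)
  simp only [neg_sq, neg_zero] at h
  rw [gaussianTail, gaussianTail, intervalIntegral.integral_symm, ← h]
  ring

lemma tendsto_gaussianTail_atBot : Tendsto gaussianTail atBot (𝓝 1) := by
  have h := (tendsto_gaussianTail_atTop.comp tendsto_neg_atBot_atTop).const_sub 1
  rw [sub_zero] at h
  refine h.congr fun x => ?_
  rw [Function.comp_apply, gaussianTail_neg, sub_sub_cancel]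

/-- The density `n t^{-3/2} e^{-πn²/t}` (up to scaling, that of the hitting time of a level by
Brownian motion); its Laplace transform is elementary. -/
noncomputable def levyDensity (n t : ℝ) : ℝ := n / √t ^ 3 * Real.exp (-Real.pi * n ^ 2 / t)

/-- An antiderivative in `t` of `levyDensity n t * exp (-π t y²)`, found by completing the square
in the exponent in both possible ways. -/
noncomputable def levyPrimitive (n y t : ℝ) : ℝ :=
  Real.exp (-2 * Real.pi * n * y) * gaussianTail (n / √t - y * √t) +
    Real.exp (2 * Real.pi * n * y) * gaussianTail (n / √t + y * √t)

lemma hasDerivAt_levyPrimitive (n y : ℝ) {t : ℝ} (ht : 0 < t) :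
    HasDerivAt (levyPrimitive n y) (levyDensity n t * Real.exp (-Real.pi * t * y ^ 2)) t := by
  have hs := Real.hasDerivAt_sqrt ht.ne'
  have hsp : 0 < √t := Real.sqrt_pos.2 ht
  have hsq : t = √t ^ 2 := (Real.sq_sqrt ht.le).symm
  have hi := (hasDerivAt_const t n).div hs hsp.ne'
  have h := (((hasDerivAt_gaussianTail _).comp t (hi.sub (hs.const_mul y))).const_mul
    (Real.exp (-2 * Real.pi * n * y))).add
    (((hasDerivAt_gaussianTail _).comp t (hi.add (hs.const_mul y))).const_mul
    (Real.exp (2 * Real.pi * n * y)))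
  refine h.congr_deriv ?_
  simp only [Pi.sub_apply, Pi.add_apply, Pi.div_apply]
  have hminus : Real.exp (-2 * Real.pi * n * y) * Real.exp (-Real.pi * (n / √t - y * √t) ^ 2) =
      Real.exp (-Real.pi * n ^ 2 / t) * Real.exp (-Real.pi * t * y ^ 2) := by
    rw [← Real.exp_add, ← Real.exp_add]
    congr 1
    generalize √t = s at *
    subst hsq
    field_simp
    ring
  have hplus : Real.exp (2 * Real.pi * n * y) * Real.exp (-Real.pi * (n / √t + y * √t) ^ 2) =
      Real.exp (-Real.pi * n ^ 2 / t) * Real.exp (-Real.pi * t * y ^ 2) := by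
    rw [← Real.exp_add, ← Real.exp_add]
    congr 1
    generalize √t = s at *
    subst hsq
    field_simp
    ring
  rw [← mul_assoc, ← mul_assoc, mul_neg, mul_neg, hminus, hplus, levyDensity]
  field_simp
  ring

lemma tendsto_levyPrimitive_nhdsGT_zero {n : ℝ} (hn : 0 < n) (y : ℝ) :
    Tendsto (levyPrimitive n y) (𝓝[>] 0) (𝓝 0) := by
  have hsqrt : Tendsto Real.sqrt (𝓝[>] 0) (𝓝[>] 0) := by
    have h := Real.continuous_sqrt.continuousWithinAt.tendsto_nhdsWithin
      (fun _ => Real.sqrt_pos.2 : MapsTo Real.sqrt (Ioi 0) (Ioi 0)) (x := 0)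
    rwa [Real.sqrt_zero] at h
  have hdiv : Tendsto (fun t : ℝ => n / √t) (𝓝[>] 0) atTop :=
    (tendsto_inv_nhdsGT_zero.comp hsqrt).const_mul_atTop hn
  have hmul : Tendsto (fun t : ℝ => y * √t) (𝓝[>] 0) (𝓝 0) := by
    simpa using (hsqrt.mono_right nhdsWithin_le_nhds).const_mul y
  unfold levyPrimitive
  simpa [sub_eq_add_neg] using
    ((tendsto_gaussianTail_atTop.comp (hdiv.atTop_add hmul.neg)).const_mul
      (Real.exp (-2 * Real.pi * n * y))).add
    ((tendsto_gaussianTail_atTop.comp (hdiv.atTop_add hmul)).const_mul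
      (Real.exp (2 * Real.pi * n * y)))

lemma tendsto_levyPrimitive_atTop (n : ℝ) {y : ℝ} (hy : 0 < y) :
    Tendsto (levyPrimitive n y) atTop (𝓝 (Real.exp (-2 * Real.pi * n * y))) := by
  have hdiv : Tendsto (fun t : ℝ => n / √t) atTop (𝓝 0) :=
    Real.tendsto_sqrt_atTop.const_div_atTop n
  have hmul : Tendsto (fun t : ℝ => y * √t) atTop atTop :=
    Real.tendsto_sqrt_atTop.const_mul_atTop hy
  unfold levyPrimitive
  simpa [sub_eq_add_neg] using
    ((tendsto_gaussianTail_atBot.comp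
      (hdiv.add_atBot (tendsto_neg_atTop_atBot.comp hmul))).const_mul
      (Real.exp (-2 * Real.pi * n * y))).add
    ((tendsto_gaussianTail_atTop.comp (hdiv.add_atTop hmul)).const_mul
      (Real.exp (2 * Real.pi * n * y)))

lemma integrableOn_and_integral_levyDensity_mul_exp {n y : ℝ} (hn : 0 < n) (hy : 0 < y) :
    IntegrableOn (fun t => levyDensity n t * Real.exp (-Real.pi * t * y ^ 2)) (Ioi 0) ∧
      ∫ t in Ioi 0, levyDensity n t * Real.exp (-Real.pi * t * y ^ 2) =
        Real.exp (-2 * Real.pi * n * y) := by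
  simpa using integrableOn_and_integral_Ioi_of_hasDerivAt_of_nonneg
    (fun t ht => hasDerivAt_levyPrimitive n y ht)
    (fun t _ => by unfold levyDensity; positivity)
    (tendsto_levyPrimitive_nhdsGT_zero hn y) (tendsto_levyPrimitive_atTop n hy)

end Levy

/-! ### The Laplace transform of `η³` along the line `Re w = 1/8` -/

section EtaLaplace

/-- The function `t ↦ η((1/2 + it)/4)³`, i.e. `E₁(u/32)` on the line of integration
`u = 1/2 + it`. -/
noncomputable def etaCubeLine (t : ℝ) : ℂ := dedekindEta ((1 / 2 + I * t) / 4) ^ 3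

lemma im_half_add_I_mul_div_four (t : ℝ) : ((1 / 2 + I * t) / 4 : ℂ).im = t / 4 := by
  rw [show ((1 / 2 + I * t) / 4 : ℂ) = (1 / 8 : ℝ) + (t / 4 : ℝ) * I by push_cast; ring]
  simp

lemma im_neg_eighth_add_I_div (t : ℝ) : (-(1 / 8) + I / (16 * t) : ℂ).im = 1 / (16 * t) := by
  rw [show (-(1 / 8) + I / (16 * t) : ℂ) = (-(1 / 8) : ℝ) + (1 / (16 * t) : ℝ) * I by
    push_cast; ring]
  simp

lemma summable_two_mul_add_one_mul_exp_neg {c : ℝ} (hc : 0 < c) :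
    Summable fun k : ℕ => (2 * (k : ℝ) + 1) * Real.exp (-c * k) := by
  have hq : ‖Real.exp (-c)‖ < 1 := by simpa using hc
  have h1 := summable_pow_mul_geometric_of_norm_lt_one (R := ℝ) 1 hq
  refine ((h1.mul_left 2).add (summable_geometric_of_norm_lt_one hq)).congr fun n => ?_
  rw [mul_comm (-c), Real.exp_nat_mul]
  ring

lemma exists_norm_dedekindEta_cube_le {c : ℝ} (hc : 0 < c) :
    ∃ A : ℝ, 0 ≤ A ∧
      ∀ w : ℂ, c ≤ w.im → ‖dedekindEta w ^ 3‖ ≤ A * Real.exp (-(Real.pi * w.im / 4)) := by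
  have hsum := summable_two_mul_add_one_mul_exp_neg (c := Real.pi * c) (by positivity)
  refine ⟨∑' k : ℕ, (2 * (k : ℝ) + 1) * Real.exp (-(Real.pi * c) * k),
    tsum_nonneg fun k => by positivity, fun w hw => ?_⟩
  rw [dedekindEta_cube_eq_tsum (hc.trans_le hw)]
  refine tsum_of_norm_bounded (hsum.hasSum.mul_right (Real.exp (-(Real.pi * w.im / 4)))) fun k => ?_
  have hodd : ‖2 * (k : ℂ) + 1‖ = 2 * k + 1 := by exact_mod_cast Complex.norm_natCast (2 * k + 1)
  have him : ((2 * (k : ℂ) + 1) ^ 2 * w / 4).im = (2 * k + 1) ^ 2 * w.im / 4 := by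
    rw [show (2 * (k : ℂ) + 1) ^ 2 * w / 4 = ((2 * k + 1) ^ 2 / 4 : ℝ) * w by push_cast; ring,
      im_ofReal_mul]
    ring
  rw [norm_mul, norm_mul, norm_pow, norm_neg, norm_one, one_pow, one_mul, hodd, norm_ePi, him,
    mul_assoc, ← Real.exp_add]
  gcongr
  have hk : c * (k : ℝ) ≤ w.im * (k ^ 2 + k) := by
    have : (0 : ℝ) ≤ k := k.cast_nonneg
    nlinarith [mul_nonneg (hc.trans_le hw).le (sq_nonneg (k : ℝ))]
  linarith [mul_le_mul_of_nonneg_left hk Real.pi_pos.le]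

lemma continuousOn_etaCubeLine : ContinuousOn etaCubeLine (Ioi 0) := by
  intro t ht
  have hη : ContinuousAt dedekindEta ((1 / 2 + I * t) / 4) := by
    rw [funext dedekindEta_eq_eta]
    refine (ModularForm.differentiableAt_eta_of_mem_upperHalfPlaneSet ?_).continuousAt
    rw [mem_ofPred_eq, im_half_add_I_mul_div_four]
    exact div_pos ht four_pos
  have hline : ContinuousAt (fun t : ℝ => ((1 / 2 + I * t) / 4 : ℂ)) t := by fun_prop
  exact ((hη.comp_of_eq hline rfl).pow 3).continuousWithinAt

lemma norm_ePi_quarter_div_sqrt_cube (t : ℝ) :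
    ‖(ePi (1 / 4) / (√(2 * t) : ℝ)) ^ 3‖ = 1 / (√2 ^ 3 * √t ^ 3) := by
  have h : ‖ePi (1 / 4)‖ = 1 := by simpa using norm_ePi_ofReal (1 / 4)
  rw [norm_pow, norm_div, h, norm_real, Real.norm_of_nonneg (Real.sqrt_nonneg _),
    Real.sqrt_mul zero_le_two, div_pow, one_pow, mul_pow]

lemma exists_norm_etaCubeLine_le : ∃ A B : ℝ, ∀ t, 0 < t →
    ‖etaCubeLine t‖ ≤ A * Real.exp (-(Real.pi / 16) * t) +
      B * (levyDensity (1 / 8) t * Real.exp (-Real.pi * t * 1 ^ 2)) := by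
  obtain ⟨A, hA0, hA⟩ := exists_norm_dedekindEta_cube_le (c := 1 / 16) (by norm_num)
  refine ⟨A, A * (8 / √2 ^ 3 * Real.exp Real.pi), fun t ht => ?_⟩
  have hlevy : 0 ≤ levyDensity (1 / 8) t := by unfold levyDensity; positivity
  rcases le_total 1 t with h1 | h1
  · have h := hA ((1 / 2 + I * t) / 4) (by rw [im_half_add_I_mul_div_four]; linarith)
    rw [im_half_add_I_mul_div_four] at h
    refine (h.trans_eq ?_).trans (le_add_of_nonneg_right (by positivity))
    ring_nf
  · have h := hA (-(1 / 8) + I / (16 * t))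
      (by rw [im_neg_eighth_add_I_div]; gcongr; linarith)
    rw [im_neg_eighth_add_I_div] at h
    refine le_add_of_nonneg_of_le (by positivity) ?_
    rw [etaCubeLine, dedekindEta_cube_line ht, norm_mul, norm_ePi_quarter_div_sqrt_cube]
    calc 1 / (√2 ^ 3 * √t ^ 3) * ‖dedekindEta (-(1 / 8) + I / (16 * t)) ^ 3‖
        ≤ 1 / (√2 ^ 3 * √t ^ 3) * (A * Real.exp (-(Real.pi * (1 / (16 * t)) / 4))) := by gcongr
      _ = A * (8 / √2 ^ 3) * levyDensity (1 / 8) t := by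
        rw [levyDensity, show -(Real.pi * (1 / (16 * t)) / 4) = -Real.pi * (1 / 8) ^ 2 / t by ring]
        ring
      _ ≤ A * (8 / √2 ^ 3) * levyDensity (1 / 8) t *
          Real.exp (Real.pi + -Real.pi * t * 1 ^ 2) := by
        refine le_mul_of_one_le_right (by positivity) (Real.one_le_exp ?_)
        nlinarith [Real.pi_pos]
      _ = _ := by
        rw [Real.exp_add]
        ring

lemma integrableOn_etaCubeLine : IntegrableOn etaCubeLine (Ioi 0) := by
  obtain ⟨A, B, hAB⟩ := exists_norm_etaCubeLine_le
  have hdom := ((exp_neg_integrableOn_Ioi 0 (b := Real.pi / 16) (by positivity)).const_mul A).add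
    ((integrableOn_and_integral_levyDensity_mul_exp
      (n := 1 / 8) (by norm_num) one_pos).1.const_mul B)
  refine Integrable.mono' hdom
    (continuousOn_etaCubeLine.aestronglyMeasurable measurableSet_Ioi) ?_
  filter_upwards [ae_restrict_mem measurableSet_Ioi] with t ht using hAB t ht

/-- The unimodular coefficients `(-1)^k e^{-πi(2k+1)²/32}` of the expansion of `η³` near the
cusp `1/8`. -/
noncomputable def etaCubeCoeff (k : ℕ) : ℂ := (-1) ^ k * ePi (-((2 * k + 1) ^ 2 / 32))

lemma norm_etaCubeCoeff (k : ℕ) : ‖etaCubeCoeff k‖ = 1 := by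
  have h := norm_ePi_ofReal (-((2 * k + 1) ^ 2 / 32))
  push_cast at h
  rw [etaCubeCoeff, norm_mul, norm_pow, norm_neg, norm_one, one_pow, one_mul, h]

lemma etaCubeLine_eq_tsum {t : ℝ} (ht : 0 < t) :
    etaCubeLine t = ∑' k : ℕ, 8 * ePi (3 / 4) / (√2 : ℝ) ^ 3 * etaCubeCoeff k *
      levyDensity ((2 * k + 1) / 8) t := by
  rw [etaCubeLine, dedekindEta_cube_line ht, dedekindEta_cube_eq_tsum, ← tsum_mul_left]
  swap
  · rw [im_neg_eighth_add_I_div]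
    positivity
  refine tsum_congr fun k => ?_
  have ht0 : (t : ℂ) ≠ 0 := ofReal_ne_zero.2 ht.ne'
  have hexp : ePi ((2 * k + 1) ^ 2 * (-(1 / 8) + I / (16 * t)) / 4) =
      ePi (-((2 * k + 1) ^ 2 / 32)) * Real.exp (-Real.pi * ((2 * k + 1) / 8) ^ 2 / t) := by
    rw [ePi, ePi, ofReal_exp, ← Complex.exp_add]
    congr 1
    push_cast
    field_simp
    linear_combination 2048 * (2 * k + 1) ^ 2 * I_sq
  rw [hexp, div_pow, ePi_pow, Real.sqrt_mul zero_le_two, etaCubeCoeff, levyDensity]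
  push_cast
  rw [show (3 : ℂ) * (1 / 4) = 3 / 4 by norm_num]
  ring

lemma etaCubeCoeff_add_eight (k : ℕ) : etaCubeCoeff (k + 8) = -etaCubeCoeff k := by
  have h : -((2 * ((k + 8 : ℕ) : ℂ) + 1) ^ 2 / 32) =
      -((2 * k + 1) ^ 2 / 32) + 1 + 2 * ((-k - 5 : ℤ) : ℂ) := by
    push_cast
    ring
  rw [etaCubeCoeff, h, ePi_add_two_mul_intCast, ePi_add_one, pow_add, etaCubeCoeff]
  ring

lemma etaCubeCoeff_eq_of_eq {k : ℕ} {m : ℤ} {n : ℕ}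
    (h : (2 * k + 1) ^ 2 + 8 * (n : ℤ) = 17 + 64 * m) :
    etaCubeCoeff k = (-1) ^ k * ePi (-(17 / 32)) * ePi (1 / 4) ^ n := by
  have h' : (2 * (k : ℂ) + 1) ^ 2 + 8 * n = 17 + 64 * m := by exact_mod_cast h
  rw [etaCubeCoeff, ePi_pow, mul_assoc, ← ePi_add, ← ePi_add_two_mul_intCast _ m]
  congr 2
  linear_combination (-(1 / 32)) * h'

lemma summable_etaCubeCoeff_mul_pow {x : ℂ} (hx : ‖x‖ < 1) :
    Summable fun k : ℕ => etaCubeCoeff k * x ^ (2 * k + 1) := by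
  refine Summable.of_norm_bounded (summable_geometric_of_lt_one (norm_nonneg x) hx) fun k => ?_
  rw [norm_mul, norm_etaCubeCoeff, one_mul, norm_pow]
  exact pow_le_pow_of_le_one (norm_nonneg x) hx.le (by omega)

lemma tsum_etaCubeCoeff_mul_pow_mul {x ζ : ℂ} (hx : ‖x‖ < 1) (hζ : ζ = ePi (1 / 4)) :
    (∑' k : ℕ, etaCubeCoeff k * x ^ (2 * k + 1)) * (1 + x ^ 16) = ePi (-(17 / 32)) *
      (x * (1 - ζ * x ^ 4) * (x ^ 8 + I) + x ^ 3 * (x ^ 4 - ζ) * (1 + I * x ^ 8)) := by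
  have hζ2 : ζ ^ 2 = I := by
    rw [hζ, ePi_pow, ← ePi_half]
    norm_num
  have hperiod (k : ℕ) : etaCubeCoeff (k + 8) * x ^ (2 * (k + 8) + 1) =
      -x ^ 16 * (etaCubeCoeff k * x ^ (2 * k + 1)) := by
    rw [etaCubeCoeff_add_eight]
    ring
  have hsplit := (summable_etaCubeCoeff_mul_pow hx).sum_add_tsum_nat_add 8
  rw [tsum_congr hperiod, tsum_mul_left] at hsplit
  have hc0 := etaCubeCoeff_eq_of_eq (k := 0) (m := 0) (n := 2) (by norm_num)
  have hc1 := etaCubeCoeff_eq_of_eq (k := 1) (m := 0) (n := 1) (by norm_num)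
  have hc2 := etaCubeCoeff_eq_of_eq (k := 2) (m := 1) (n := 7) (by norm_num)
  have hc3 := etaCubeCoeff_eq_of_eq (k := 3) (m := 1) (n := 4) (by norm_num)
  have hc4 := etaCubeCoeff_eq_of_eq (k := 4) (m := 1) (n := 0) (by norm_num)
  have hc5 := etaCubeCoeff_eq_of_eq (k := 5) (m := 2) (n := 3) (by norm_num)
  have hc6 := etaCubeCoeff_eq_of_eq (k := 6) (m := 3) (n := 5) (by norm_num)
  have hc7 := etaCubeCoeff_eq_of_eq (k := 7) (m := 4) (n := 6) (by norm_num)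
  simp only [Finset.sum_range_succ, Finset.sum_range_zero, hc0, hc1, hc2, hc3, hc4, hc5, hc6, hc7,
    ← hζ] at hsplit
  have hζ4 : ζ ^ 4 + 1 = 0 := by
    rw [show ζ ^ 4 = (ζ ^ 2) ^ 2 by ring, hζ2, I_sq, neg_add_cancel]
  rw [← hζ2]
  linear_combination -hsplit +
    ePi (-(17 / 32)) * (ζ ^ 3 * x ^ 5 - x ^ 7 + ζ * x ^ 13 - ζ ^ 2 * x ^ 15) * hζ4

/-- The meromorphic function whose values on `Im x = 1/4`, symmetrised, are the Laplace transform
of `η³` on the line, and which becomes a Mordell integrand on the real line. -/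
noncomputable def etaLaplaceKernel (x : ℂ) : ℂ :=
  (cexp (-(3 * Real.pi * x / 4)) - cexp (Real.pi * x / 4)) / (2 * Complex.cosh (Real.pi * x))

lemma etaLaplaceKernel_eq (x : ℂ) : etaLaplaceKernel x =
    cexp (Real.pi * x / 4) * (1 - cexp (Real.pi * x / 4) ^ 4) /
      (1 + cexp (Real.pi * x / 4) ^ 8) := by
  set z := cexp (Real.pi * x / 4) with hz
  have hz0 : z ≠ 0 := Complex.exp_ne_zero _
  have hz3 : cexp (-(3 * Real.pi * x / 4)) = (z ^ 3)⁻¹ := by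
    rw [hz, ← Complex.exp_nat_mul, ← Complex.exp_neg]
    push_cast
    ring_nf
  have hz4 : cexp (Real.pi * x) = z ^ 4 := by
    rw [hz, ← Complex.exp_nat_mul]
    push_cast
    ring_nf
  rw [etaLaplaceKernel, hz3, ← hz, Complex.cosh, Complex.exp_neg, hz4,
    mul_div_cancel₀ _ two_ne_zero, ← mul_div_mul_right _ _ (pow_ne_zero 4 hz0)]
  congr 1
  · field_simp
  · field_simp
    ring

lemma cexp_pi_mul_add_I_div_four (y : ℝ) :
    cexp (Real.pi * (y + I / 4) / 4) = ePi (1 / 16) * Real.exp (Real.pi * y / 4) := by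
  rw [ePi, ofReal_exp, ← Complex.exp_add]
  push_cast
  ring_nf

lemma etaLaplaceKernel_add_etaLaplaceKernel {x y : ℝ} (hx : x = Real.exp (-(Real.pi * y / 4))) :
    (etaLaplaceKernel (y + I / 4) + etaLaplaceKernel (-y + I / 4)) * (1 + x ^ 16) =
      -I * ePi (1 / 16) * (x * (1 - ePi (1 / 4) * x ^ 4) * (x ^ 8 + I) +
        x ^ 3 * (x ^ 4 - ePi (1 / 4)) * (1 + I * x ^ 8)) := by
  have hx0 : (x : ℂ) ≠ 0 := ofReal_ne_zero.2 (hx ▸ (Real.exp_pos _).ne')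
  have hζ : ePi (1 / 16) ^ 4 = ePi (1 / 4) := by rw [ePi_pow]; norm_num
  have hI : ePi (1 / 16) ^ 8 = I := by rw [ePi_pow, ← ePi_half]; norm_num
  have hpos : cexp (Real.pi * (y + I / 4) / 4) = ePi (1 / 16) * (x : ℂ)⁻¹ := by
    rw [cexp_pi_mul_add_I_div_four, hx, Real.exp_neg, ofReal_inv, inv_inv]
  have hneg : cexp (Real.pi * (-y + I / 4) / 4) = ePi (1 / 16) * x := by
    have h := cexp_pi_mul_add_I_div_four (-y)
    rwa [ofReal_neg, mul_neg, neg_div, ← hx] at h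
  have hd1 : (x : ℂ) ^ 8 + I ≠ 0 := fun h => by
    simpa [← ofReal_pow] using congrArg im h
  have hd2 : 1 + I * (x : ℂ) ^ 8 ≠ 0 := fun h => by
    simpa [← ofReal_pow] using congrArg re h
  have hpos' : etaLaplaceKernel (y + I / 4) =
      ePi (1 / 16) * x ^ 3 * (x ^ 4 - ePi (1 / 4)) / (x ^ 8 + I) := by
    rw [etaLaplaceKernel_eq, hpos, mul_pow, mul_pow, hζ, hI,
      ← mul_div_mul_right _ _ (pow_ne_zero 8 hx0)]
    congr 1 <;> field_simp
  have hden : ((x : ℂ) ^ 8 + I) * (1 + I * x ^ 8) = I * (1 + x ^ 16) := by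
    linear_combination (x : ℂ) ^ 8 * I_sq
  rw [hpos', etaLaplaceKernel_eq, hneg, mul_pow, mul_pow, hζ, hI, div_add_div _ _ hd1 hd2,
    div_mul_eq_mul_div, div_eq_iff (mul_ne_zero hd1 hd2), hden]
  linear_combination ePi (1 / 16) * (x * (1 - ePi (1 / 4) * x ^ 4) * (x ^ 8 + I) +
    x ^ 3 * (x ^ 4 - ePi (1 / 4)) * (1 + I * x ^ 8)) * (1 + (x : ℂ) ^ 16) * I_sq

lemma integral_tsum_mul_ofReal {α : Type*} [MeasurableSpace α] {μ : Measure α} {g : ℕ → α → ℝ}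
    {c : ℕ → ℂ} (hg : ∀ k, Integrable (g k) μ) (hg0 : ∀ k t, 0 ≤ g k t)
    (hs : Summable fun k => ‖c k‖ * ∫ t, g k t ∂μ) :
    ∫ t, ∑' k, c k * g k t ∂μ = ∑' k, c k * (∫ t, g k t ∂μ : ℝ) := by
  have hnorm (k : ℕ) : ∫ t, ‖c k * g k t‖ ∂μ = ‖c k‖ * ∫ t, g k t ∂μ := by
    rw [← integral_const_mul]
    exact integral_congr_ae (Eventually.of_forall fun t => by simp [abs_of_nonneg (hg0 k t)])
  have key := hasSum_integral_of_summable_integral_norm (F := fun k t => c k * (g k t : ℂ))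
    (fun k => (hg k).ofReal.const_mul (c k)) (hs.congr fun k => (hnorm k).symm)
  rw [← key.tsum_eq]
  exact tsum_congr fun k => by rw [integral_const_mul, integral_complex_ofReal]

lemma integral_etaCubeLine_mul_exp_eq_tsum {x y : ℝ} (hy : 0 < y)
    (hx : x = Real.exp (-(Real.pi * y / 4))) :
    ∫ t in Ioi 0, etaCubeLine t * Real.exp (-Real.pi * t * y ^ 2) =
      8 * ePi (3 / 4) / (√2 : ℝ) ^ 3 * ∑' k : ℕ, etaCubeCoeff k * x ^ (2 * k + 1) := by
  have hlevy (k : ℕ) := integrableOn_and_integral_levyDensity_mul_exp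
    (n := (2 * (k : ℝ) + 1) / 8) (by positivity) hy
  have hpow (k : ℕ) : Real.exp (-2 * Real.pi * ((2 * (k : ℝ) + 1) / 8) * y) = x ^ (2 * k + 1) := by
    rw [hx, ← Real.exp_nat_mul]
    push_cast
    ring_nf
  have hx1 : ‖x‖ < 1 := by
    rw [hx, Real.norm_of_nonneg (Real.exp_nonneg _), Real.exp_lt_one_iff, neg_lt_zero]
    positivity
  have hsum := integral_tsum_mul_ofReal (c := etaCubeCoeff)
    (g := fun k t => levyDensity ((2 * k + 1) / 8) t * Real.exp (-Real.pi * t * y ^ 2))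
    (fun k => (hlevy k).1) (fun k t => by unfold levyDensity; positivity) (by
      refine Summable.of_norm_bounded (summable_geometric_of_lt_one (norm_nonneg x) hx1) fun k => ?_
      rw [norm_etaCubeCoeff, one_mul, (hlevy k).2, hpow, norm_pow]
      exact pow_le_pow_of_le_one (norm_nonneg x) hx1.le (by omega))
  simp only [fun k => (hlevy k).2, hpow, ofReal_pow] at hsum
  rw [← hsum, ← integral_const_mul]
  refine setIntegral_congr_fun measurableSet_Ioi fun t ht => ?_
  rw [etaCubeLine_eq_tsum ht, ← tsum_mul_right, ← tsum_mul_left]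
  refine tsum_congr fun k => ?_
  push_cast
  ring

lemma integral_etaCubeLine_mul_exp_of_pos {y : ℝ} (hy : 0 < y) :
    ∫ t in Ioi 0, etaCubeLine t * Real.exp (-Real.pi * t * y ^ 2) =
      -(8 / (√2 : ℝ) ^ 3) * ePi (-(11 / 32)) *
        (etaLaplaceKernel (y + I / 4) + etaLaplaceKernel (-y + I / 4)) := by
  obtain ⟨x, hx⟩ : ∃ x, x = Real.exp (-(Real.pi * y / 4)) := ⟨_, rfl⟩
  have hx1 : ‖(x : ℂ)‖ < 1 := by
    rw [norm_real, hx, Real.norm_of_nonneg (Real.exp_nonneg _), Real.exp_lt_one_iff, neg_lt_zero]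
    positivity
  have hx16 : (1 + x ^ 16 : ℂ) ≠ 0 := by
    have : (1 + x ^ 16 : ℝ) ≠ 0 := by positivity
    exact_mod_cast this
  have hphase : ePi (3 / 4) * ePi (-(17 / 32)) = I * (ePi (-(11 / 32)) * ePi (1 / 16)) := by
    rw [← ePi_half, ← ePi_add, ← ePi_add, ← ePi_add]
    norm_num
  rw [integral_etaCubeLine_mul_exp_eq_tsum hy hx]
  refine mul_right_cancel₀ hx16 ?_
  rw [mul_assoc, tsum_etaCubeCoeff_mul_pow_mul hx1 rfl, mul_assoc _ (_ + _),
    etaLaplaceKernel_add_etaLaplaceKernel hx]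
  linear_combination 8 / (√2 : ℂ) ^ 3 * (x * (1 - ePi (1 / 4) * x ^ 4) * (x ^ 8 + I) +
        x ^ 3 * (x ^ 4 - ePi (1 / 4)) * (1 + I * x ^ 8)) * hphase

lemma integral_etaCubeLine_mul_exp {y : ℝ} (hy : y ≠ 0) :
    ∫ t in Ioi 0, etaCubeLine t * Real.exp (-Real.pi * t * y ^ 2) =
      -(8 / (√2 : ℝ) ^ 3) * ePi (-(11 / 32)) *
        (etaLaplaceKernel (y + I / 4) + etaLaplaceKernel (-y + I / 4)) := by
  rcases hy.lt_or_gt with h | h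
  · have hneg := integral_etaCubeLine_mul_exp_of_pos (neg_pos.2 h)
    rwa [neg_sq, ofReal_neg, neg_neg, add_comm (etaLaplaceKernel _)] at hneg
  · exact integral_etaCubeLine_mul_exp_of_pos h

lemma integral_div_cpow_half_eq {f : ℝ → ℂ} (hf : IntegrableOn f (Ioi 0)) {σ : ℂ}
    (hσ : 0 < σ.im) :
    ∫ t in Ioi (0 : ℝ), f t / (t - I * σ) ^ (1 / 2 : ℂ) =
      ∫ y : ℝ, ePi (σ * y ^ 2) * ∫ t in Ioi (0 : ℝ), f t * Real.exp (-Real.pi * t * y ^ 2) := by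
  let G : ℝ → ℝ → ℂ := fun t y => f t * cexp (-(Real.pi * (t - I * σ)) * y ^ 2)
  have hre (t : ℝ) : (Real.pi * (t - I * σ) : ℂ).re = Real.pi * (t + σ.im) := by
    rw [re_ofReal_mul]
    simp
  have hgauss : ∀ t ∈ Ioi (0 : ℝ), f t / (t - I * σ) ^ (1 / 2 : ℂ) = ∫ y : ℝ, G t y := by
    intro t (ht : 0 < t)
    have harg : arg (t - I * σ) ≠ Real.pi := fun h => by
      have hneg := (arg_eq_pi_iff.1 h).1
      simp only [sub_re, ofReal_re, I_mul_re] at hneg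
      linarith
    rw [integral_const_mul, integral_gaussian_complex (by rw [hre]; positivity),
      div_mul_cancel_left₀ (ofReal_ne_zero.2 Real.pi_ne_zero), inv_cpow _ _ harg, div_eq_mul_inv]
  have hG : Integrable (Function.uncurry G) ((volume.restrict (Ioi 0)).prod volume) := by
    refine (hf.norm.mul_prod (integrable_exp_neg_mul_sq (b := Real.pi * σ.im)
      (by positivity))).mono' ?_ ?_
    · exact hf.aestronglyMeasurable.comp_fst.mul
        (Continuous.aestronglyMeasurable (by fun_prop))
    · filter_upwards [Measure.quasiMeasurePreserving_fst.ae (ae_restrict_mem measurableSet_Ioi)]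
        with p (hp : 0 < p.1)
      rw [Function.uncurry_apply_pair, norm_mul, norm_exp]
      gcongr
      rw [neg_mul, neg_re, ← ofReal_pow, re_mul_ofReal, hre]
      nlinarith [mul_nonneg (mul_pos Real.pi_pos hp).le (sq_nonneg p.2)]
  rw [setIntegral_congr_fun measurableSet_Ioi hgauss, integral_integral_swap hG]
  refine integral_congr_ae (Eventually.of_forall fun y => ?_)
  simp only [G, ← integral_const_mul]
  refine integral_congr_ae (Eventually.of_forall fun t => ?_)
  simp only
  rw [mul_left_comm, ePi, ofReal_exp, ← Complex.exp_add]
  push_cast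
  ring_nf

theorem integral_etaCubeLine_div_cpow_half {σ : ℂ} (hσ : 0 < σ.im) :
    ∫ t in Ioi (0 : ℝ), etaCubeLine t / (t - I * σ) ^ (1 / 2 : ℂ) =
      -(8 / (√2 : ℝ) ^ 3) * ePi (-(11 / 32)) *
        ∫ y : ℝ, ePi (σ * y ^ 2) *
          (etaLaplaceKernel (y + I / 4) + etaLaplaceKernel (-y + I / 4)) := by
  rw [integral_div_cpow_half_eq integrableOn_etaCubeLine hσ, ← integral_const_mul]
  refine integral_congr_ae ?_
  filter_upwards [volume.ae_ne 0] with y hy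
  rw [integral_etaCubeLine_mul_exp hy]
  ring

end EtaLaplace

/-! ### Contour shifts against `1/cosh πx` -/

section ContourShift

lemma exp_abs_re_le_four_mul_norm_cosh {z : ℂ} (hz : 1 ≤ |z.re|) :
    Real.exp |z.re| ≤ 4 * ‖Complex.cosh z‖ := by
  wlog h : 0 ≤ z.re generalizing z
  · have hneg := this (z := -z) (by simpa using hz) (by simp only [neg_re]; linarith)
    rwa [neg_re, abs_neg, Complex.cosh_neg] at hneg
  rw [abs_of_nonneg h] at hz ⊢
  have hdiff : Real.exp z.re - Real.exp (-z.re) ≤ 2 * ‖Complex.cosh z‖ := by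
    have hnorm := norm_sub_norm_le (cexp z) (-cexp (-z))
    rw [norm_neg, norm_exp, norm_exp, neg_re, sub_neg_eq_add] at hnorm
    rwa [Complex.cosh, norm_div, Complex.norm_two, mul_div_cancel₀ _ two_ne_zero]
  have hexp : 2 * Real.exp (-z.re) ≤ Real.exp z.re := by
    have h2 := Real.add_one_le_exp z.re
    have h1 : Real.exp (-z.re) ≤ 1 := Real.exp_le_one_iff.2 (by linarith)
    linarith
  linarith

lemma one_add_sq_le_exp_abs_pi_mul (x : ℝ) : 1 + x ^ 2 ≤ Real.exp |Real.pi * x| := by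
  have h := Real.quadratic_le_exp_of_nonneg (abs_nonneg (Real.pi * x))
  rw [sq_abs, mul_pow] at h
  have hpi : 2 ≤ Real.pi ^ 2 := by nlinarith [Real.pi_gt_three]
  nlinarith [abs_nonneg (Real.pi * x), sq_nonneg x]

lemma norm_le_of_norm_mul_cosh_le {w : ℂ} {x y C : ℝ} (hx : 1 ≤ |x|)
    (h : ‖w * Complex.cosh (Real.pi * (x + y * I))‖ ≤ C) : ‖w‖ ≤ 4 * C * (1 + x ^ 2)⁻¹ := by
  have hre : (Real.pi * (x + y * I) : ℂ).re = Real.pi * x := by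
    rw [re_ofReal_mul]
    simp
  have hpix : 1 ≤ |Real.pi * x| := by
    rw [abs_mul, abs_of_pos Real.pi_pos]
    nlinarith [Real.pi_gt_three]
  have hcosh := exp_abs_re_le_four_mul_norm_cosh (z := Real.pi * (x + y * I)) (by rwa [hre])
  rw [hre] at hcosh
  rw [norm_mul] at h
  rw [← div_eq_mul_inv, le_div_iff₀ (by positivity)]
  calc ‖w‖ * (1 + x ^ 2) ≤ ‖w‖ * (4 * ‖Complex.cosh (Real.pi * (x + y * I))‖) := by
        gcongr
        exact (one_add_sq_le_exp_abs_pi_mul x).trans hcosh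
    _ ≤ 4 * C := by linarith

lemma eventually_one_le_abs_cocompact : ∀ᶠ x : ℝ in cocompact ℝ, 1 ≤ |x| :=
  (tendsto_norm_cocompact_atTop (E := ℝ)).eventually_ge_atTop 1

lemma integrable_of_norm_mul_cosh_le {f : ℝ → ℂ} {y C : ℝ} (hf : Continuous f)
    (hC : ∀ x : ℝ, ‖f x * Complex.cosh (Real.pi * (x + y * I))‖ ≤ C) : Integrable f := by
  refine hf.locallyIntegrable.integrable_of_isBigO_cocompact ?_
    (integrable_inv_one_add_sq.integrableAtFilter _)
  refine Asymptotics.IsBigO.of_bound (4 * C) ?_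
  filter_upwards [eventually_one_le_abs_cocompact] with x hx
  rw [Real.norm_of_nonneg (by positivity)]
  exact norm_le_of_norm_mul_cosh_le hx (hC x)

lemma integrable_line_of_norm_mul_cosh_le {f : ℂ → ℂ} {a y C : ℝ} (hy : y ∈ Icc 0 a)
    (hf : ∀ z : ℂ, z.im ∈ Icc 0 a → DifferentiableAt ℂ f z)
    (hC : ∀ z : ℂ, z.im ∈ Icc 0 a → ‖f z * Complex.cosh (Real.pi * z)‖ ≤ C) :
    Integrable fun x : ℝ => f (x + y * I) := by
  have him (x : ℝ) : (x + y * I : ℂ).im ∈ Icc 0 a := by simpa using hy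
  refine integrable_of_norm_mul_cosh_le (y := y) ?_ fun x => hC _ (him x)
  exact continuous_iff_continuousAt.2 fun x =>
    (hf _ (him x)).continuousAt.comp (f := fun x : ℝ => (x + y * I : ℂ)) (by fun_prop)

lemma tendsto_integral_vertical_of_norm_mul_cosh_le {f : ℂ → ℂ} {a C : ℝ} (ha : 0 ≤ a)
    (hC : ∀ z : ℂ, z.im ∈ Icc 0 a → ‖f z * Complex.cosh (Real.pi * z)‖ ≤ C) :
    Tendsto (fun x : ℝ => ∫ y in (0 : ℝ)..a, f (x + y * I)) (cocompact ℝ) (𝓝 0) := by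
  have hlim : Tendsto (fun x : ℝ => 4 * C * (1 + x ^ 2)⁻¹ * |a - 0|) (cocompact ℝ) (𝓝 0) := by
    have hsq : Tendsto (fun x : ℝ => 1 + x ^ 2) (cocompact ℝ) atTop := by
      simpa using tendsto_atTop_add_const_left _ 1
        ((tendsto_pow_atTop two_ne_zero).comp (tendsto_norm_cocompact_atTop (E := ℝ)))
    simpa using (hsq.inv_tendsto_atTop.const_mul (4 * C)).mul_const |a - 0|
  refine squeeze_zero_norm' ?_ hlim
  filter_upwards [eventually_one_le_abs_cocompact] with x hx
  refine intervalIntegral.norm_integral_le_of_norm_le_const fun y hy => ?_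
  rw [uIoc_of_le ha] at hy
  exact norm_le_of_norm_mul_cosh_le hx (hC _ (by simpa using Ioc_subset_Icc_self hy))

theorem integral_eq_integral_add_mul_I_of_norm_mul_cosh_le {f : ℂ → ℂ} {a C : ℝ} (ha : 0 ≤ a)
    (hf : ∀ z : ℂ, z.im ∈ Icc 0 a → DifferentiableAt ℂ f z)
    (hC : ∀ z : ℂ, z.im ∈ Icc 0 a → ‖f z * Complex.cosh (Real.pi * z)‖ ≤ C) :
    ∫ x : ℝ, f x = ∫ x : ℝ, f (x + a * I) := by
  have hrect (R : ℝ) : (∫ x in (-R)..R, f x) - (∫ x in (-R)..R, f (x + a * I)) +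
      I * (∫ y in (0 : ℝ)..a, f (R + y * I)) -
      I * (∫ y in (0 : ℝ)..a, f ((-R : ℝ) + y * I)) = 0 := by
    simpa using Complex.integral_boundary_rect_eq_zero_of_differentiableOn f (-R : ℝ) (R + a * I)
      fun z hz => (hf z (by simpa [uIcc_of_le ha] using hz.2)).differentiableWithinAt
  have hvert := tendsto_integral_vertical_of_norm_mul_cosh_le ha hC
  have hlim0 := intervalIntegral_tendsto_integral
    (integrable_line_of_norm_mul_cosh_le (left_mem_Icc.2 ha) hf hC) tendsto_neg_atTop_atBot
    tendsto_id
  have hlima := intervalIntegral_tendsto_integral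
    (integrable_line_of_norm_mul_cosh_le (right_mem_Icc.2 ha) hf hC) tendsto_neg_atTop_atBot
    tendsto_id
  have hlim := ((hlim0.sub hlima).add
    ((hvert.mono_left atTop_le_cocompact).const_mul I)).sub
    (((hvert.mono_left atBot_le_cocompact).comp tendsto_neg_atTop_atBot).const_mul I)
  have h0 := tendsto_nhds_unique (hlim.congr fun R => by simpa using hrect R) tendsto_const_nhds
  simpa [sub_eq_zero] using h0

lemma exists_differentiableAt_mul_eq_of_simple_zero {N D : ℂ → ℂ} {c : ℂ}
    (hN : Differentiable ℂ N) (hD : Differentiable ℂ D) (hNc : N c = 0) (hDc : D c = 0)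
    (hD' : deriv D c ≠ 0) :
    ∃ φ : ℂ → ℂ, ∀ z, (D z = 0 → z = c) → DifferentiableAt ℂ φ z ∧ φ z * D z = N z := by
  have hdslope {F : ℂ → ℂ} (hF : Differentiable ℂ F) : Differentiable ℂ (dslope F c) :=
    differentiableOn_univ.1 ((Complex.differentiableOn_dslope univ_mem).2 hF.differentiableOn)
  refine ⟨fun z => dslope N c z / dslope D c z, fun z hz => ?_⟩
  have hN0 := sub_smul_dslope N c z
  have hD0 := sub_smul_dslope D c z
  rw [smul_eq_mul, hNc, sub_zero] at hN0
  rw [smul_eq_mul, hDc, sub_zero] at hD0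
  have hne : dslope D c z ≠ 0 := fun h => by
    rw [h, mul_zero] at hD0
    rw [hz hD0.symm, dslope_same] at h
    exact hD' h
  refine ⟨(hdslope hN z).div (hdslope hD z) hne, ?_⟩
  rw [← hN0, ← hD0]
  field_simp

lemma cosh_pi_mul_I_div_two : Complex.cosh (Real.pi * (I / 2)) = 0 := by
  rw [show (Real.pi * (I / 2) : ℂ) = Real.pi / 2 * I by ring, Complex.cosh_mul_I,
    Complex.cos_pi_div_two]

lemma eq_I_div_two_of_cosh_pi_mul_eq_zero {z : ℂ} (hz : z.im ∈ Icc 0 1)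
    (h : Complex.cosh (Real.pi * z) = 0) : z = I / 2 := by
  rw [← Complex.cos_mul_I, Complex.cos_eq_zero_iff] at h
  obtain ⟨k, hk⟩ := h
  have hzk : z = -((2 * k + 1) / 2 : ℝ) * I := by
    have hpi : (Real.pi : ℂ) ≠ 0 := ofReal_ne_zero.2 Real.pi_ne_zero
    have hzI : z * I = (2 * k + 1) / 2 := by
      refine mul_left_cancel₀ hpi ?_
      linear_combination hk
    push_cast
    linear_combination (-I) * hzI + z * I_sq
  have him : z.im = -((2 * k + 1) / 2) := by simp [hzk]
  rw [him, mem_Icc] at hz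
  have hk1 : k = -1 := by
    have h1 : (k : ℝ) < 0 := by linarith
    have h2 : (-2 : ℝ) < k := by linarith
    have h3 : k < 0 := by exact_mod_cast h1
    have h4 : -2 < k := by exact_mod_cast h2
    omega
  rw [hzk, hk1]
  push_cast
  ring

lemma cosh_pi_mul_add_I (z : ℂ) :
    Complex.cosh (Real.pi * (z + I)) = -Complex.cosh (Real.pi * z) := by
  rw [mul_add, Complex.cosh_add, Complex.cosh_mul_I, Complex.sinh_mul_I, Complex.cos_pi,
    Complex.sin_pi]
  ring

lemma cosh_pi_mul_ofReal_ne_zero (x : ℝ) : Complex.cosh (Real.pi * x) ≠ 0 := by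
  rw [← ofReal_mul, ← ofReal_cosh]
  exact ofReal_ne_zero.2 (Real.cosh_pos _).ne'

lemma integrable_div_cosh_of_norm_le {f : ℝ → ℂ} {C : ℝ} (hf : Continuous f)
    (hC : ∀ x, ‖f x‖ ≤ C) : Integrable fun x : ℝ => f x / Complex.cosh (Real.pi * x) := by
  refine integrable_of_norm_mul_cosh_le (y := 0) (C := C) ?_ fun x => ?_
  · exact hf.div (by fun_prop) cosh_pi_mul_ofReal_ne_zero
  · rw [ofReal_zero, zero_mul, add_zero, div_mul_cancel₀ _ (cosh_pi_mul_ofReal_ne_zero x)]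
    exact hC x

lemma integral_one_div_cosh_pi_mul : ∫ x : ℝ, 1 / Complex.cosh (Real.pi * x) = 1 := by
  have hint := integrable_div_cosh_of_norm_le (f := fun _ => 1) (C := 1) continuous_const (by simp)
  have hreal : ∫ x : ℝ, (Real.cosh (Real.pi * x))⁻¹ = 1 := by
    have hderiv (x : ℝ) : HasDerivAt (fun x => Real.arctan (Real.sinh (Real.pi * x)) / Real.pi)
        (Real.cosh (Real.pi * x))⁻¹ x := by
      have hlin : HasDerivAt (fun x : ℝ => Real.pi * x) Real.pi x := by
        simpa using (hasDerivAt_id x).const_mul Real.pi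
      refine (hlin.sinh.arctan.div_const Real.pi).congr_deriv ?_
      have := (Real.cosh_pos (Real.pi * x)).ne'
      rw [add_comm, ← Real.cosh_sq]
      field_simp
    have htop : Tendsto (fun x => Real.arctan (Real.sinh (Real.pi * x)) / Real.pi) atTop
        (𝓝 (Real.pi / 2 / Real.pi)) :=
      ((Real.tendsto_arctan_atTop.mono_right nhdsWithin_le_nhds).comp <|
        Real.sinhOrderIso.tendsto_atTop.comp <|
          tendsto_id.const_mul_atTop Real.pi_pos).div_const _
    have hbot : Tendsto (fun x => Real.arctan (Real.sinh (Real.pi * x)) / Real.pi) atBot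
        (𝓝 (-(Real.pi / 2) / Real.pi)) :=
      ((Real.tendsto_arctan_atBot.mono_right nhdsWithin_le_nhds).comp <|
        Real.sinhOrderIso.tendsto_atBot.comp <|
          tendsto_id.const_mul_atBot Real.pi_pos).div_const _
    rw [integral_of_hasDerivAt_of_tendsto hderiv ?_ hbot htop]
    · field_simp
      norm_num
    · simpa [← ofReal_mul, ← ofReal_cosh, ← ofReal_inv] using hint.re
  have hcomplex := integral_complex_ofReal (μ := volume)
    (f := fun x : ℝ => (Real.cosh (Real.pi * x))⁻¹)
  rw [hreal] at hcomplex
  simpa using hcomplex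

lemma exists_differentiableAt_mul_cosh_eq_sub {g : ℂ → ℂ} (hg : Differentiable ℂ g) :
    ∃ φ : ℂ → ℂ, ∀ z : ℂ, z.im ∈ Icc 0 1 →
      DifferentiableAt ℂ φ z ∧ φ z * Complex.cosh (Real.pi * z) = g z - g (I / 2) := by
  have hderiv : deriv (fun z : ℂ => Complex.cosh (Real.pi * z)) (I / 2) ≠ 0 := by
    have h : HasDerivAt (fun z : ℂ => Complex.cosh (Real.pi * z))
        (Complex.sinh (Real.pi * (I / 2)) * (Real.pi * 1)) (I / 2) :=
      ((hasDerivAt_id (I / 2)).const_mul (Real.pi : ℂ)).ccosh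
    rw [h.deriv, show (Real.pi * (I / 2) : ℂ) = Real.pi / 2 * I by ring, Complex.sinh_mul_I,
      Complex.sin_pi_div_two]
    simp
  obtain ⟨φ, hφ⟩ := exists_differentiableAt_mul_eq_of_simple_zero (hg.sub_const (g (I / 2)))
    (show Differentiable ℂ fun z : ℂ => Complex.cosh (Real.pi * z) by fun_prop)
    (sub_self _) cosh_pi_mul_I_div_two hderiv
  exact ⟨φ, fun z hz => hφ z (eq_I_div_two_of_cosh_pi_mul_eq_zero hz)⟩

theorem integral_div_cosh_add_integral_div_cosh {g : ℂ → ℂ} {C : ℝ} (hg : Differentiable ℂ g)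
    (hC : ∀ z : ℂ, z.im ∈ Icc 0 1 → ‖g z‖ ≤ C) :
    (∫ x : ℝ, g x / Complex.cosh (Real.pi * x)) +
      ∫ x : ℝ, g (x + I) / Complex.cosh (Real.pi * x) = 2 * g (I / 2) := by
  obtain ⟨φ, hφ⟩ := exists_differentiableAt_mul_cosh_eq_sub hg
  have hshift := integral_eq_integral_add_mul_I_of_norm_mul_cosh_le (C := C + C) zero_le_one
    (fun z hz => (hφ z hz).1) fun z hz => by
      rw [(hφ z hz).2]
      exact (norm_sub_le _ _).trans (add_le_add (hC z hz) (hC _ (by norm_num)))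
  have hone := integral_one_div_cosh_pi_mul
  have hint1 := (integrable_div_cosh_of_norm_le (f := fun _ => 1) continuous_const
    (fun _ => norm_one.le)).const_mul (g (I / 2))
  have hint0 := integrable_div_cosh_of_norm_le (f := fun x : ℝ => g x)
    (hg.continuous.comp continuous_ofReal)
    fun x => hC x (by simp)
  have hintI := integrable_div_cosh_of_norm_le (f := fun x : ℝ => g (x + I))
    (hg.continuous.comp (by fun_prop)) fun x => hC (x + I) (by simp)
  have hφ0 (x : ℝ) : φ x = g x / Complex.cosh (Real.pi * x) -
      g (I / 2) * (1 / Complex.cosh (Real.pi * x)) := by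
    rw [mul_one_div, ← sub_div, eq_div_iff (cosh_pi_mul_ofReal_ne_zero x)]
    exact (hφ x (by simp)).2
  have hφI (x : ℝ) : φ (x + (1 : ℝ) * I) = g (I / 2) * (1 / Complex.cosh (Real.pi * x)) -
      g (x + I) / Complex.cosh (Real.pi * x) := by
    rw [mul_one_div, ← sub_div, eq_div_iff (cosh_pi_mul_ofReal_ne_zero x), ofReal_one, one_mul]
    have h := (hφ (x + I) (by simp)).2
    rw [cosh_pi_mul_add_I] at h
    linear_combination -h
  simp_rw [hφ0, hφI] at hshift
  rw [integral_sub hint0 hint1, integral_sub hint1 hintI, integral_const_mul, hone] at hshift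
  linear_combination hshift

end ContourShift

/-! ### The Mordell integral -/

lemma abs_mul_cexp_re_mul_le {w c : ℂ} {r : ℝ} (hr : |w.re| + 1 ≤ r) (hc : c = r) (x : ℝ) :
    ‖(x : ℂ) * cexp (w * x)‖ ≤ ‖cexp (c * x)‖ + ‖cexp (-c * x)‖ := by
  subst hc
  rw [norm_mul, norm_real, Real.norm_eq_abs, norm_exp, norm_exp, norm_exp, re_mul_ofReal,
    re_mul_ofReal, re_mul_ofReal, neg_re, ofReal_re]
  have hx : |x| ≤ Real.exp |x| := by linarith [Real.add_one_le_exp |x|]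
  have hwx : w.re * x + |x| ≤ r * |x| := by
    have h := (le_abs_self (w.re * x)).trans_eq (abs_mul _ _)
    nlinarith [abs_nonneg x]
  calc |x| * Real.exp (w.re * x) ≤ Real.exp |x| * Real.exp (w.re * x) := by gcongr
    _ = Real.exp (w.re * x + |x|) := by rw [Real.exp_add, mul_comm]
    _ ≤ Real.exp (r * |x|) := by gcongr
    _ ≤ Real.exp (r * x) + Real.exp (-r * x) := by
      rcases abs_choice x with h | h <;> rw [h]
      · linarith [Real.exp_pos (-r * x)]
      · linarith [Real.exp_pos (r * x), congrArg Real.exp (show r * -x = -r * x by ring)]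

lemma differentiable_integral_cexp_mul {μ : Measure ℝ} {f : ℝ → ℂ}
    (hf : ∀ w : ℂ, Integrable (fun x : ℝ => cexp (w * x) * f x) μ) :
    Differentiable ℂ fun w : ℂ => ∫ x : ℝ, cexp (w * x) * f x ∂μ := by
  intro w₀
  obtain ⟨c, r, hr, hc⟩ : ∃ (c : ℂ) (r : ℝ), |w₀.re| + 2 ≤ r ∧ c = r := ⟨_, _, le_rfl, rfl⟩
  have hmeas : AEStronglyMeasurable f μ := by simpa using (hf 0).aestronglyMeasurable
  refine (hasDerivAt_integral_of_dominated_loc_of_deriv_le (Metric.ball_mem_nhds w₀ one_pos)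
    (F' := fun w (x : ℝ) => (x * cexp (w * x)) * f x)
    (bound := fun x : ℝ => ‖cexp (c * x) * f x‖ + ‖cexp (-c * x) * f x‖)
    (.of_forall fun w => (hf w).aestronglyMeasurable) (hf w₀)
    (AEStronglyMeasurable.mul (by fun_prop) hmeas) (.of_forall fun x w hw => ?_)
    ((hf c).norm.add (hf (-c)).norm) (.of_forall fun x w _ => ?_)).2.differentiableAt
  · have hre : |w.re| + 1 ≤ r := by
      have hsub := (abs_re_le_norm (w - w₀)).trans (mem_ball_iff_norm.1 hw).le
      rw [sub_re] at hsub
      linarith [abs_sub_abs_le_abs_sub w.re w₀.re]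
    rw [norm_mul, norm_mul _ (f x), norm_mul _ (f x), ← add_mul]
    gcongr
    exact abs_mul_cexp_re_mul_le hre hc x
  · have h := (((hasDerivAt_id w).mul_const (x : ℂ)).cexp.mul_const (f x))
    simp only [id, one_mul] at h
    exact h.congr_deriv (by ring)

/-- The Mordell integral `h(z; σ) = ∫ e^{πiσx² - 2πzx} / cosh πx dx`. -/
noncomputable def mordellIntegral (σ z : ℂ) : ℂ :=
  ∫ x : ℝ, ePi (σ * x ^ 2 + 2 * I * z * x) / Complex.cosh (Real.pi * x)

section MordellIntegral

variable {σ : ℂ}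

lemma exists_norm_ePi_quadratic_le (hσ : 0 < σ.im) (b : ℂ) :
    ∃ C, ∀ w : ℂ, w.im ∈ Icc 0 1 → ‖ePi (σ * w ^ 2 + b * w)‖ ≤ C := by
  set k := 2 * |σ.re| + |b.im|
  refine ⟨Real.exp (Real.pi * (k ^ 2 / (4 * σ.im) + σ.im + |b.re|)), fun w ⟨h0, h1⟩ => ?_⟩
  rw [norm_ePi, Real.exp_le_exp, ← mul_neg]
  refine mul_le_mul_of_nonneg_left ?_ Real.pi_pos.le
  have him : (σ * w ^ 2 + b * w).im =
      σ.im * w.re ^ 2 + (2 * σ.re * w.im + b.im) * w.re - σ.im * w.im ^ 2 + b.re * w.im := by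
    simp only [add_im, mul_im, sq, mul_re]
    ring
  have hlin : -(k * |w.re|) ≤ (2 * σ.re * w.im + b.im) * w.re := by
    refine (neg_le_neg ?_).trans (neg_abs_le _)
    rw [abs_mul]
    gcongr
    refine (abs_add_le _ _).trans (add_le_add_left ?_ _)
    rw [abs_mul, abs_mul, abs_two, abs_of_nonneg h0]
    exact mul_le_of_le_one_right (by positivity) h1
  have hquad : k * |w.re| - σ.im * w.re ^ 2 ≤ k ^ 2 / (4 * σ.im) := by
    rw [le_div_iff₀ (by positivity), ← sq_abs w.re]
    nlinarith [sq_nonneg (k - 2 * σ.im * |w.re|)]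
  have hconst : -|b.re| ≤ b.re * w.im := by
    refine (neg_le_neg ?_).trans (neg_abs_le _)
    rw [abs_mul, abs_of_nonneg h0]
    exact mul_le_of_le_one_right (abs_nonneg _) h1
  have hsq : σ.im * w.im ^ 2 ≤ σ.im := mul_le_of_le_one_right hσ.le (pow_le_one₀ h0 h1)
  rw [him]
  linarith

lemma integrable_ePi_quadratic_div_cosh (hσ : 0 < σ.im) (b : ℂ) :
    Integrable fun x : ℝ => ePi (σ * x ^ 2 + b * x) / Complex.cosh (Real.pi * x) := by
  obtain ⟨C, hC⟩ := exists_norm_ePi_quadratic_le hσ b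
  exact integrable_div_cosh_of_norm_le (f := fun x : ℝ => ePi (σ * x ^ 2 + b * x))
    (differentiable_ePi.continuous.comp (by fun_prop)) fun x => hC x (by simp)

lemma differentiable_mordellIntegral (hσ : 0 < σ.im) : Differentiable ℂ (mordellIntegral σ) := by
  have hsplit (w : ℂ) (x : ℝ) : cexp (w * x) * (ePi (σ * x ^ 2) / Complex.cosh (Real.pi * x)) =
      ePi (σ * x ^ 2 + w / (Real.pi * I) * x) / Complex.cosh (Real.pi * x) := by
    rw [ePi_add, ← mul_div_assoc, mul_comm]
    congr 2
    rw [ePi]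
    congr 1
    field_simp [Real.pi_ne_zero, I_ne_zero]
  have h := differentiable_integral_cexp_mul (μ := volume)
    (f := fun x => ePi (σ * x ^ 2) / Complex.cosh (Real.pi * x))
    fun w => by simpa only [hsplit] using integrable_ePi_quadratic_div_cosh hσ _
  convert! h.comp (f := fun z : ℂ => -2 * Real.pi * z) (by fun_prop) using 1
  ext z
  simp only [mordellIntegral, Function.comp_apply, hsplit]
  refine integral_congr_ae (.of_forall fun x => ?_)
  dsimp only
  congr 3
  field_simp [Real.pi_ne_zero, I_ne_zero]
  linear_combination (z * x) * I_sq

lemma mordellIntegral_neg (σ z : ℂ) : mordellIntegral σ (-z) = mordellIntegral σ z := by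
  rw [mordellIntegral, ← integral_neg_eq_self, mordellIntegral]
  simp only [ofReal_neg, mul_neg, neg_sq, Complex.cosh_neg, neg_mul, neg_neg]

lemma integral_ePi_quadratic (hσ : 0 < σ.im) (b c : ℂ) :
    ∫ x : ℝ, ePi (σ * x ^ 2 + b * x + c) =
      (-I * σ) ^ (-(1 / 2) : ℂ) * ePi (c - b ^ 2 / (4 * σ)) := by
  have hre : (Real.pi * I * σ).re < 0 := by
    rw [mul_assoc, re_ofReal_mul, I_mul_re]
    nlinarith [Real.pi_pos]
  have h := integral_cexp_quadratic hre (Real.pi * I * b) (Real.pi * I * c)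
  have hσ0 := ne_zero_of_im_pos hσ
  rw [show (Real.pi / -(Real.pi * I * σ) : ℂ) = (-I * σ)⁻¹ by
    field_simp [Real.pi_ne_zero, I_ne_zero], inv_cpow, ← cpow_neg] at h
  · convert! h using 2
    · ext x
      rw [ePi]
      ring_nf
    · rw [ePi]
      congr 1
      field_simp [Real.pi_ne_zero, I_ne_zero]
  · intro harg
    have hre : 0 < (-I * σ).re := by simpa using hσ
    have hlt := (abs_lt.1 (abs_arg_lt_pi_div_two_iff.2 (.inl hre))).2
    linarith [Real.pi_pos]

lemma mordellIntegral_add_mordellIntegral_add_one (hσ : 0 < σ.im) (z : ℂ) :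
    mordellIntegral σ z + mordellIntegral σ (z + 1) =
      2 * (-I * σ) ^ (-(1 / 2) : ℂ) * ePi ((z + 1 / 2) ^ 2 / σ) := by
  have hnum (x : ℝ) : ePi (σ * x ^ 2 + 2 * I * z * x) / Complex.cosh (Real.pi * x) +
      ePi (σ * x ^ 2 + 2 * I * (z + 1) * x) / Complex.cosh (Real.pi * x) =
      2 * ePi (σ * x ^ 2 + 2 * I * (z + 1 / 2) * x + 0) := by
    have hcosh : Complex.cosh (Real.pi * x) = (ePi (-I * x) + ePi (I * x)) / 2 := by
      rw [Complex.cosh, ePi, ePi]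
      congr 3
      · linear_combination (Real.pi * x : ℂ) * I_sq
      · linear_combination (-(Real.pi * x) : ℂ) * I_sq
    rw [← add_div, div_eq_iff (cosh_pi_mul_ofReal_ne_zero x), hcosh, mul_assoc 2 (ePi _),
      mul_div_assoc', mul_div_cancel₀ _ two_ne_zero, mul_add (ePi _), ← ePi_add, ← ePi_add]
    ring_nf
  rw [mordellIntegral, mordellIntegral, ← integral_add (integrable_ePi_quadratic_div_cosh hσ _)
    (integrable_ePi_quadratic_div_cosh hσ _)]
  simp only [hnum]
  rw [integral_const_mul, integral_ePi_quadratic hσ, ← mul_assoc]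
  congr 2
  rw [mul_pow, mul_pow, I_sq]
  ring

lemma mordellIntegral_add_mul_mordellIntegral_add (hσ : 0 < σ.im) (z : ℂ) :
    mordellIntegral σ z + ePi (-2 * z - σ) * mordellIntegral σ (z + σ) =
      2 * ePi (-z - σ / 4) := by
  obtain ⟨C, hC⟩ := exists_norm_ePi_quadratic_le hσ (2 * I * z)
  have h := integral_div_cosh_add_integral_div_cosh
    (g := fun w => ePi (σ * w ^ 2 + 2 * I * z * w)) (differentiable_ePi.comp (by fun_prop)) hC
  rw [mordellIntegral, mordellIntegral, ← integral_const_mul]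
  convert! h using 3
  · ext x
    rw [← mul_div_assoc, ← ePi_add]
    congr 2
    linear_combination (-σ - 2 * z) * I_sq
  · linear_combination (-σ / 4 - z) * I_sq

end MordellIntegral

section EtaLaplaceKernel

variable {σ : ℂ}

lemma ePi_mul_etaLaplaceKernel (σ w : ℂ) :
    ePi (σ * (w - I / 4) ^ 2) * etaLaplaceKernel w = ePi (-(σ / 16)) / 2 *
      (ePi (σ * w ^ 2 + 2 * I * (3 / 8 - σ / 4) * w) / Complex.cosh (Real.pi * w) -
        ePi (σ * w ^ 2 + 2 * I * (-(1 / 8) - σ / 4) * w) / Complex.cosh (Real.pi * w)) := by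
  have hexp (r : ℂ) : cexp (r * Real.pi * w) = ePi (-(I * r * w)) := by
    rw [ePi]
    congr 1
    linear_combination (r * Real.pi * w) * I_sq
  have hmul (r : ℂ) : ePi (σ * (w - I / 4) ^ 2) * cexp (r * Real.pi * w) =
      ePi (-(σ / 16)) * ePi (σ * w ^ 2 + 2 * I * (-(r / 2) - σ / 4) * w) := by
    rw [hexp, ← ePi_add, ← ePi_add]
    congr 1
    linear_combination (σ / 16) * I_sq
  have h₁ := hmul (-(3 / 4))
  have h₂ := hmul (1 / 4)
  rw [etaLaplaceKernel, show (-(3 * Real.pi * w / 4) : ℂ) = -(3 / 4) * Real.pi * w by ring,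
    show (Real.pi * w / 4 : ℂ) = 1 / 4 * Real.pi * w by ring, ← sub_div, ← mul_div_assoc, mul_sub,
    h₁, h₂]
  ring_nf

lemma differentiableAt_etaLaplaceKernel {w : ℂ} (hw : w.im ∈ Icc 0 (1 / 4)) :
    DifferentiableAt ℂ etaLaplaceKernel w := by
  have hcosh : Complex.cosh (Real.pi * w) ≠ 0 := fun h => by
    have him := hw.2
    rw [eq_I_div_two_of_cosh_pi_mul_eq_zero ⟨hw.1, by linarith⟩ h] at him
    norm_num at him
  unfold etaLaplaceKernel
  exact DifferentiableAt.div (by fun_prop) (by fun_prop) (mul_ne_zero two_ne_zero hcosh)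

lemma differentiableAt_ePi_mul_etaLaplaceKernel (σ : ℂ) {w : ℂ} (hw : w.im ∈ Icc 0 (1 / 4)) :
    DifferentiableAt ℂ (fun w => ePi (σ * (w - I / 4) ^ 2) * etaLaplaceKernel w) w :=
  (differentiable_ePi.differentiableAt.comp w (by fun_prop)).mul
    (differentiableAt_etaLaplaceKernel hw)

lemma exists_norm_ePi_mul_etaLaplaceKernel_mul_cosh_le (hσ : 0 < σ.im) :
    ∃ C, ∀ w : ℂ, w.im ∈ Icc 0 (1 / 4) →
      ‖ePi (σ * (w - I / 4) ^ 2) * etaLaplaceKernel w * Complex.cosh (Real.pi * w)‖ ≤ C := by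
  obtain ⟨C₁, hC₁⟩ := exists_norm_ePi_quadratic_le hσ (2 * I * (3 / 8 - σ / 4))
  obtain ⟨C₂, hC₂⟩ := exists_norm_ePi_quadratic_le hσ (2 * I * (-(1 / 8) - σ / 4))
  have hdiv (x y : ℂ) : ‖x / y * y‖ ≤ ‖x‖ := by
    rcases eq_or_ne y 0 with rfl | hy
    · simp
    · rw [div_mul_cancel₀ _ hy]
  refine ⟨‖ePi (-(σ / 16)) / 2‖ * (C₁ + C₂), fun w hw => ?_⟩
  have hw' : w.im ∈ Icc 0 1 := ⟨hw.1, hw.2.trans (by norm_num)⟩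
  rw [ePi_mul_etaLaplaceKernel, mul_assoc, norm_mul, sub_mul]
  gcongr
  exact (norm_sub_le _ _).trans
    (add_le_add ((hdiv _ _).trans (hC₁ w hw')) ((hdiv _ _).trans (hC₂ w hw')))

lemma integrable_ePi_mul_etaLaplaceKernel (hσ : 0 < σ.im) :
    Integrable fun y : ℝ => ePi (σ * y ^ 2) * etaLaplaceKernel (y + I / 4) := by
  obtain ⟨C, hC⟩ := exists_norm_ePi_mul_etaLaplaceKernel_mul_cosh_le hσ
  have h := integrable_line_of_norm_mul_cosh_le (right_mem_Icc.2 (by norm_num : (0 : ℝ) ≤ 1 / 4))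
    (fun w hw => differentiableAt_ePi_mul_etaLaplaceKernel σ hw) hC
  convert! h using 2 with y
  push_cast
  ring_nf

lemma integral_ePi_mul_etaLaplaceKernel (hσ : 0 < σ.im) :
    ∫ y : ℝ, ePi (σ * y ^ 2) * etaLaplaceKernel (y + I / 4) =
      ePi (-(σ / 16)) / 2 *
        (mordellIntegral σ (σ / 4 - 3 / 8) - mordellIntegral σ (σ / 4 + 1 / 8)) := by
  obtain ⟨C, hC⟩ := exists_norm_ePi_mul_etaLaplaceKernel_mul_cosh_le hσ
  have hshift := integral_eq_integral_add_mul_I_of_norm_mul_cosh_le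
    (by norm_num : (0 : ℝ) ≤ 1 / 4)
    (fun w hw => differentiableAt_ePi_mul_etaLaplaceKernel σ hw) hC
  calc ∫ y : ℝ, ePi (σ * y ^ 2) * etaLaplaceKernel (y + I / 4)
      = ∫ x : ℝ, ePi (σ * (x - I / 4) ^ 2) * etaLaplaceKernel x := by
        rw [hshift]
        congr! 4 with y
        · push_cast
          ring
        · push_cast
          ring
    _ = ePi (-(σ / 16)) / 2 *
        (mordellIntegral σ (3 / 8 - σ / 4) - mordellIntegral σ (-(1 / 8) - σ / 4)) := by
        simp only [ePi_mul_etaLaplaceKernel]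
        rw [integral_const_mul, integral_sub (integrable_ePi_quadratic_div_cosh hσ _)
          (integrable_ePi_quadratic_div_cosh hσ _), mordellIntegral, mordellIntegral]
    _ = _ := by
        rw [← mordellIntegral_neg σ (3 / 8 - σ / 4), ← mordellIntegral_neg σ (-(1 / 8) - σ / 4)]
        ring_nf

lemma integral_ePi_mul_etaLaplaceKernel_add (hσ : 0 < σ.im) :
    ∫ y : ℝ, ePi (σ * y ^ 2) * (etaLaplaceKernel (y + I / 4) + etaLaplaceKernel (-y + I / 4)) =
      ePi (-(σ / 16)) *
        (mordellIntegral σ (σ / 4 - 3 / 8) - mordellIntegral σ (σ / 4 + 1 / 8)) := by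
  have hint := integrable_ePi_mul_etaLaplaceKernel hσ
  have hneg := integral_neg_eq_self
    (fun y : ℝ => ePi (σ * y ^ 2) * etaLaplaceKernel (y + I / 4)) volume
  have hint_neg := hint.comp_neg
  simp only [ofReal_neg, neg_sq] at hneg hint_neg
  simp only [mul_add]
  rw [integral_add hint hint_neg, hneg, integral_ePi_mul_etaLaplaceKernel hσ]
  ring

end EtaLaplaceKernel

section MordellPeriod

/-- The Mordell integral in the normalisation `H(w) = e^{πi(w - σ/4)} h(w - σ/2; σ)`, whose
functional equation along `σ` has a constant right-hand side. -/
noncomputable def normalizedMordell (σ w : ℂ) : ℂ :=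
  ePi (w - σ / 4) * mordellIntegral σ (w - σ / 2)

/-- The solution `y` of `y(w) - e^{-πi(2w + τ)} y(w + τ) = 1 - (2τ + 1)^{-1/2} e^{2πiw²/(2τ + 1)}`,
a combination of two Mordell integrals with modulus `τ + 1/2`. -/
noncomputable def mordellPeriod (τ w : ℂ) : ℂ :=
  ePi (-(1 / 4)) / (2 * (√2 : ℝ)) *
    (normalizedMordell (τ + 1 / 2) w + I * normalizedMordell (τ + 1 / 2) (w + 1 / 2))

lemma normalizedMordell_sub_normalizedMordell_add_one {σ : ℂ} (hσ : 0 < σ.im) (w : ℂ) :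
    normalizedMordell σ w - normalizedMordell σ (w + 1) =
      -2 * I * (-I * σ) ^ (-(1 / 2) : ℂ) * ePi ((w + 1 / 2) ^ 2 / σ) := by
  have hσ0 := ne_zero_of_im_pos hσ
  have h := mordellIntegral_add_mordellIntegral_add_one hσ (w - σ / 2)
  have hexp : ePi (w - σ / 4) * ePi ((w - σ / 2 + 1 / 2) ^ 2 / σ) =
      -I * ePi ((w + 1 / 2) ^ 2 / σ) := by
    rw [← inv_I, ← ePi_half, ← ePi_neg, ← ePi_add, ← ePi_add]
    congr 1
    field_simp
    ring
  rw [normalizedMordell, normalizedMordell, add_sub_right_comm, ePi_add_one, neg_mul,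
    sub_neg_eq_add, add_sub_right_comm, ← mul_add, h, mul_left_comm, hexp]
  ring

lemma normalizedMordell_add_mul_normalizedMordell_add {σ : ℂ} (hσ : 0 < σ.im) (w : ℂ) :
    normalizedMordell σ w + ePi (-2 * w - σ) * normalizedMordell σ (w + σ) = 2 := by
  have h := mordellIntegral_add_mul_mordellIntegral_add hσ (w - σ / 2)
  calc _ = ePi (w - σ / 4) * (mordellIntegral σ (w - σ / 2) +
        ePi (-2 * (w - σ / 2) - σ) * mordellIntegral σ (w - σ / 2 + σ)) := by
        rw [normalizedMordell, normalizedMordell, mul_add, ← mul_assoc, ← mul_assoc, ← ePi_add,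
          ← ePi_add]
        ring_nf
    _ = 2 := by
        rw [h, mul_left_comm, ← ePi_add, show w - σ / 4 + (-(w - σ / 2) - σ / 4) = 0 by ring,
          ePi_zero, mul_one]

variable {τ : ℂ}

lemma im_add_half_pos (hτ : 0 < τ.im) : 0 < (τ + 1 / 2).im := by simpa using hτ

lemma differentiable_mordellPeriod (hτ : 0 < τ.im) : Differentiable ℂ (mordellPeriod τ) := by
  have h : Differentiable ℂ (normalizedMordell (τ + 1 / 2)) :=
    (differentiable_ePi.comp (by fun_prop)).mul
      ((differentiable_mordellIntegral (im_add_half_pos hτ)).comp (by fun_prop))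
  exact (h.add ((h.comp (by fun_prop)).const_mul I)).const_mul _

lemma ePi_neg_quarter_mul_one_add_I : ePi (-(1 / 4)) * (1 + I) = (√2 : ℝ) := by
  have hval : ePi (-(1 / 4)) = (√2 : ℝ) / 2 * (1 - I) := by
    rw [ePi, show (Real.pi * I * -(1 / 4) : ℂ) = -((Real.pi / 4 : ℝ) : ℂ) * I by push_cast; ring,
      exp_mul_I, Complex.cos_neg, Complex.sin_neg, ← ofReal_cos, ← ofReal_sin,
      Real.cos_pi_div_four, Real.sin_pi_div_four]
    push_cast
    ring
  rw [hval]
  linear_combination (-(√2 : ℝ) / 2) * I_sq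

lemma mul_neg_I_mul_cpow_neg_half (hτ : 0 < τ.im) :
    ePi (-(1 / 4)) / (√2 : ℝ) * (-I * (τ + 1 / 2)) ^ (-(1 / 2) : ℂ) =
      (2 * τ + 1) ^ (-(1 / 2) : ℂ) := by
  have hσ := im_add_half_pos hτ
  rw [cpow_neg, cpow_neg, neg_I_mul_cpow_half hσ,
    show 2 * τ + 1 = (2 : ℝ) * (τ + 1 / 2) by push_cast; ring,
    ofReal_mul_cpow two_pos (ne_zero_of_im_pos hσ), ofReal_cpow_half zero_le_two]
  field_simp [ePi_ne_zero]

lemma mordellPeriod_add_one_sub (hτ : 0 < τ.im) (w : ℂ) :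
    mordellPeriod τ (w + 1) - mordellPeriod τ w = (2 * τ + 1) ^ (-(1 / 2) : ℂ) *
      (I * ePi (2 * (w + 1 / 2) ^ 2 / (2 * τ + 1)) - ePi (2 * (w + 1) ^ 2 / (2 * τ + 1))) := by
  have hσ := im_add_half_pos hτ
  have hdiv (x : ℂ) : 2 * x / (2 * τ + 1) = x / (τ + 1 / 2) := by
    rw [show 2 * τ + 1 = 2 * (τ + 1 / 2) by ring, mul_div_mul_left _ _ two_ne_zero]
  have h₁ := normalizedMordell_sub_normalizedMordell_add_one hσ w
  have h₂ := normalizedMordell_sub_normalizedMordell_add_one hσ (w + 1 / 2)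
  rw [show w + 1 / 2 + 1 / 2 = w + 1 by ring] at h₂
  rw [mordellPeriod, mordellPeriod, add_right_comm w, hdiv, hdiv, ← mul_neg_I_mul_cpow_neg_half hτ]
  linear_combination (-ePi (-(1 / 4)) / (2 * (√2 : ℝ))) * (h₁ + I * h₂) +
    ePi (-(1 / 4)) / (√2 : ℝ) * (-I * (τ + 1 / 2)) ^ (-(1 / 2) : ℂ) *
      ePi ((w + 1) ^ 2 / (τ + 1 / 2)) * I_sq

lemma mordellPeriod_sub_mul_mordellPeriod_add (hτ : 0 < τ.im) (w : ℂ) :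
    mordellPeriod τ w - ePi (-2 * w - τ) * mordellPeriod τ (w + τ) =
      1 - (2 * τ + 1) ^ (-(1 / 2) : ℂ) * ePi (2 * w ^ 2 / (2 * τ + 1)) := by
  have hσ := im_add_half_pos hτ
  have hdiv : 2 * w ^ 2 / (2 * τ + 1) = w ^ 2 / (τ + 1 / 2) := by
    rw [show 2 * τ + 1 = 2 * (τ + 1 / 2) by ring, mul_div_mul_left _ _ two_ne_zero]
  have h₁ := normalizedMordell_add_mul_normalizedMordell_add hσ w
  have h₂ := normalizedMordell_add_mul_normalizedMordell_add hσ (w - 1 / 2)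
  have h₃ := normalizedMordell_sub_normalizedMordell_add_one hσ (w - 1 / 2)
  rw [show -2 * (w - 1 / 2) - (τ + 1 / 2) = -2 * w - (τ + 1 / 2) + 1 by ring, ePi_add_one,
    show w - 1 / 2 + (τ + 1 / 2) = w + τ by ring] at h₂
  rw [show w - 1 / 2 + 1 = w + 1 / 2 by ring, sub_add_cancel] at h₃
  have hone : ePi (-(1 / 4)) / (2 * (√2 : ℝ)) * (2 * (1 + I)) = 1 := by
    rw [div_mul_eq_mul_div, mul_left_comm, ePi_neg_quarter_mul_one_add_I,
      div_self (by simp)]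
  rw [mordellPeriod, mordellPeriod, show -2 * w - τ = -2 * w - (τ + 1 / 2) + 1 / 2 by ring,
    ePi_add, ePi_half, add_assoc w τ, hdiv, ← mul_neg_I_mul_cpow_neg_half hτ]
  set A := ePi (-2 * w - (τ + 1 / 2))
  set E := (-I * (τ + 1 / 2)) ^ (-(1 / 2) : ℂ) * ePi (w ^ 2 / (τ + 1 / 2))
  linear_combination ePi (-(1 / 4)) / (2 * (√2 : ℝ)) * (h₁ + I * h₂ - I * h₃) + hone +
    ePi (-(1 / 4)) / (2 * (√2 : ℝ)) * I_sq *
      (2 * E - A * normalizedMordell (τ + 1 / 2) (w + (τ + 1 / 2)))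

end MordellPeriod

/-! ### Quasi-periodic entire functions -/

section QuasiPeriodic

lemma ePi_eq_one_iff (x : ℂ) : ePi x = 1 ↔ ∃ n : ℤ, x = 2 * n := by
  rw [ePi, Complex.exp_eq_one_iff]
  refine exists_congr fun n => ?_
  rw [show (n * (2 * Real.pi * I) : ℂ) = Real.pi * I * (2 * n) by ring,
    mul_right_inj' (mul_ne_zero (ofReal_ne_zero.2 Real.pi_ne_zero) I_ne_zero)]

variable {τ u : ℂ}

lemma exists_norm_le_of_norm_periodic {f : ℂ → ℂ} (hτ : 0 < τ.im) (hf : Continuous f)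
    (h₁ : Function.Periodic (fun z => ‖f z‖) 1) (h₂ : Function.Periodic (fun z => ‖f z‖) τ) :
    ∃ C, ∀ z, ‖f z‖ ≤ C := by
  have hK : IsCompact ((fun p : ℝ × ℝ => (p.1 : ℂ) + p.2 * τ) '' (Icc 0 1 ×ˢ Icc 0 1)) :=
    (isCompact_Icc.prod isCompact_Icc).image (by fun_prop)
  obtain ⟨C, hC⟩ := hK.exists_bound_of_continuousOn hf.continuousOn
  refine ⟨C, fun z => ?_⟩
  obtain ⟨x, y, rfl⟩ : ∃ x y : ℝ, z = x + y * τ :=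
    ⟨z.re - z.im / τ.im * τ.re, z.im / τ.im, Complex.ext (by simp) (by simp [hτ.ne'])⟩
  have hfract : (x + y * τ : ℂ) - ⌊y⌋ • τ - ⌊x⌋ • (1 : ℂ) = Int.fract x + Int.fract y * τ := by
    simp only [Int.fract, zsmul_eq_mul]
    push_cast
    ring
  rw [← h₂.sub_zsmul_eq ⌊y⌋, ← h₁.sub_zsmul_eq ⌊x⌋, hfract]
  exact hC _ ⟨(Int.fract x, Int.fract y), ⟨⟨Int.fract_nonneg x, (Int.fract_lt_one x).le⟩,
    Int.fract_nonneg y, (Int.fract_lt_one y).le⟩, rfl⟩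

lemma eq_zero_of_quasiperiodic (hτ : 0 < τ.im) (hu : ∀ m n : ℤ, u ≠ m * τ + n) {f : ℂ → ℂ}
    (hf : Differentiable ℂ f) (h₁ : ∀ z, f (z + 1) = f z)
    (h₂ : ∀ z, f z = ePi (2 * u) * f (z + τ)) (z : ℂ) : f z = 0 := by
  -- `α` makes `g` periodic up to factors of modulus one.
  set α : ℂ := ((2 * u.im / τ.im : ℝ) : ℂ) with hα
  set g : ℂ → ℂ := fun z => f z * ePi (α * z)
  have hg₁ (z : ℂ) : g (z + 1) = ePi α * g z := by
    simp only [g, h₁, mul_add, mul_one, ePi_add]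
    ring
  have hg₂ (z : ℂ) : g (z + τ) = ePi (α * τ - 2 * u) * g z := by
    simp only [g, h₂ z, mul_add, sub_eq_add_neg, ePi_add, ePi_neg]
    field_simp [ePi_ne_zero]
  have hnorm₁ : ‖ePi α‖ = 1 := norm_ePi_ofReal _
  have hnorm₂ : ‖ePi (α * τ - 2 * u)‖ = 1 := by
    have him : (α * τ - 2 * u).im = 0 := by
      rw [hα, sub_im, im_ofReal_mul, div_mul_cancel₀ _ hτ.ne']
      simp
    rw [norm_ePi, him, mul_zero, neg_zero, Real.exp_zero]
  have hg : Differentiable ℂ g := hf.mul (differentiable_ePi.comp (by fun_prop))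
  obtain ⟨C, hC⟩ := exists_norm_le_of_norm_periodic hτ hg.continuous
    (fun z => by simp only [hg₁, norm_mul, hnorm₁, one_mul])
    (fun z => by simp only [hg₂, norm_mul, hnorm₂, one_mul])
  have hconst := hg.apply_eq_apply_of_bounded
    (isBounded_iff_forall_norm_le.2 ⟨C, forall_mem_range.2 hC⟩)
  by_contra hz
  have hgz : g z ≠ 0 := mul_ne_zero hz (ePi_ne_zero _)
  obtain ⟨m, hm⟩ := (ePi_eq_one_iff α).1
    (mul_right_cancel₀ hgz (by rw [one_mul, ← hg₁, hconst]))
  obtain ⟨n, hn⟩ := (ePi_eq_one_iff (α * τ - 2 * u)).1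
    (mul_right_cancel₀ hgz (by rw [one_mul, ← hg₂, hconst]))
  refine hu m (-n) ?_
  push_cast
  linear_combination (-1 / 2) * hn + τ / 2 * hm

end QuasiPeriodic

/-! ### Appell sums -/

/-- The Appell–Lerch sum `∑ₙ e^{2πinz + πin²τ} / (1 - e^{2πi(u + nτ)})`; up to an exponential factor
its quotient by `ϑ(z; τ)` is Zwegers' function `μ`. -/
noncomputable def appellSum (u z τ : ℂ) : ℂ :=
  ∑' n : ℤ, jacobiTheta₂_term n z τ / (1 - ePi (2 * (u + n * τ)))

section AppellSum

variable {τ u : ℂ}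

lemma one_sub_ePi_ne_zero (hu : ∀ m n : ℤ, u ≠ m * τ + n) (n : ℤ) :
    1 - ePi (2 * (u + n * τ)) ≠ 0 := by
  rw [Ne, sub_eq_zero, eq_comm, ePi_eq_one_iff]
  rintro ⟨m, hm⟩
  refine hu (-n) m ?_
  push_cast
  linear_combination hm / 2

lemma exists_norm_inv_one_sub_ePi_le (hτ : 0 < τ.im) (u : ℂ) :
    ∃ C, ∀ n : ℤ, ‖(1 - ePi (2 * (u + n * τ)))⁻¹‖ ≤ C := by
  have hnorm (n : ℤ) : ‖ePi (2 * (u + n * τ))‖ = Real.exp (-(2 * Real.pi * (u.im + n * τ.im))) := by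
    rw [norm_ePi]
    congr 1
    simp
    ring
  have hinv (n : ℤ) (hn : 1 / 2 ≤ |1 - ‖ePi (2 * (u + n * τ))‖|) :
      ‖(1 - ePi (2 * (u + n * τ)))⁻¹‖ ≤ 2 := by
    have h := hn.trans (norm_one (α := ℂ) ▸ abs_norm_sub_norm_le 1 (ePi (2 * (u + n * τ))))
    rw [norm_inv]
    exact inv_le_of_inv_le₀ two_pos (by simpa using h)
  have htop : Tendsto (fun n : ℤ => ‖ePi (2 * (u + n * τ))‖) atTop (𝓝 0) := by
    simp only [hnorm]
    exact Real.tendsto_exp_neg_atTop_nhds_zero.comp ((tendsto_atTop_add_const_left _ _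
      (tendsto_intCast_atTop_atTop.atTop_mul_const hτ)).const_mul_atTop Real.two_pi_pos)
  have hbot : Tendsto (fun n : ℤ => ‖ePi (2 * (u + n * τ))‖) atBot atTop := by
    simp only [hnorm]
    exact Real.tendsto_exp_atTop.comp (tendsto_neg_atBot_atTop.comp ((tendsto_atBot_add_const_left
      _ _ ((tendsto_intCast_atBot_iff.2 tendsto_id).atBot_mul_const hτ)).const_mul_atBot
        Real.two_pi_pos))
  have hbound : ∀ᶠ n : ℤ in cofinite, ‖(1 - ePi (2 * (u + n * τ)))⁻¹‖ ≤ 2 := by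
    rw [Int.cofinite_eq, eventually_sup]
    refine ⟨(hbot.eventually_ge_atTop 2).mono fun n hn => hinv n ?_,
      (htop.eventually_le_const one_half_pos).mono fun n hn => hinv n ?_⟩
    · rw [abs_sub_comm]
      exact le_abs.2 (.inl (by linarith))
    · exact le_abs.2 (.inl (by linarith))
  obtain ⟨C, hC⟩ := (isBoundedUnder_of_eventually_le hbound).bddAbove_range_of_cofinite
  exact ⟨C, fun n => hC (mem_range_self n)⟩

lemma summable_appellSum (hτ : 0 < τ.im) (u z : ℂ) :
    Summable fun n : ℤ => jacobiTheta₂_term n z τ / (1 - ePi (2 * (u + n * τ))) := by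
  obtain ⟨C, hC⟩ := exists_norm_inv_one_sub_ePi_le hτ u
  refine .of_norm_bounded
    (((summable_jacobiTheta₂_term_iff z τ).2 hτ).norm.mul_right C) fun n => ?_
  rw [div_eq_mul_inv, norm_mul]
  gcongr
  exact hC n

lemma differentiable_appellSum (hτ : 0 < τ.im) (u : ℂ) :
    Differentiable ℂ fun z => appellSum u z τ := by
  intro z₀
  obtain ⟨C, hC⟩ := exists_norm_inv_one_sub_ePi_le hτ u
  obtain ⟨S, hS⟩ := exists_gt |z₀.im|
  have hopen : IsOpen {z : ℂ | |z.im| < S} := isOpen_lt (by fun_prop) continuous_const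
  have hsum := (summable_pow_mul_jacobiTheta₂_term_bound S hτ 0).mul_right C
  simp only [pow_zero, one_mul] at hsum
  refine (differentiableOn_tsum_of_summable_norm hsum (fun n => ?_) hopen fun n z hz => ?_
    ).differentiableAt (hopen.mem_nhds hS)
  · simp only [jacobiTheta₂_term]
    fun_prop
  · rw [div_eq_mul_inv, norm_mul]
    gcongr
    · exact norm_jacobiTheta₂_term_le hτ hz.le le_rfl n
    · exact hC n

lemma appellSum_add_one (u z τ : ℂ) : appellSum u (z + 1) τ = appellSum u z τ := by
  have hterm (n : ℤ) : jacobiTheta₂_term n (z + 1) τ = jacobiTheta₂_term n z τ := by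
    rw [jacobiTheta₂_term_eq_ePi, jacobiTheta₂_term_eq_ePi,
      ← ePi_add_two_mul_intCast (2 * n * z + n ^ 2 * τ) n]
    ring_nf
  simp only [appellSum, hterm]

lemma appellSum_sub_mul_appellSum_add (hτ : 0 < τ.im) (hu : ∀ m n : ℤ, u ≠ m * τ + n) (z : ℂ) :
    appellSum u z τ - ePi (2 * u) * appellSum u (z + τ) τ = jacobiTheta₂ z τ := by
  rw [appellSum, appellSum, ← tsum_mul_left, ← (summable_appellSum hτ u z).tsum_sub
    ((summable_appellSum hτ u (z + τ)).mul_left _), jacobiTheta₂]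
  refine tsum_congr fun n => ?_
  have hterm : ePi (2 * u) * jacobiTheta₂_term n (z + τ) τ =
      jacobiTheta₂_term n z τ * ePi (2 * (u + n * τ)) := by
    rw [jacobiTheta₂_term_eq_ePi, jacobiTheta₂_term_eq_ePi, ← ePi_add, ← ePi_add]
    ring_nf
  rw [← mul_div_assoc, hterm, ← sub_div, ← mul_one_sub,
    mul_div_cancel_right₀ _ (one_sub_ePi_ne_zero hu n)]

lemma appellSum_add_add (u z τ : ℂ) :
    appellSum (u + τ) (z + τ) τ = ePi (-τ - 2 * z) * appellSum u z τ := by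
  rw [appellSum, ← (Equiv.subRight (1 : ℤ)).tsum_eq, appellSum, ← tsum_mul_left]
  refine tsum_congr fun n => ?_
  rw [← mul_div_assoc, Equiv.subRight_apply, jacobiTheta₂_term_eq_ePi, jacobiTheta₂_term_eq_ePi,
    ← ePi_add]
  push_cast
  ring_nf

lemma jacobiTheta₂_add_self (z τ : ℂ) :
    jacobiTheta₂ (z + τ) τ = ePi (-τ - 2 * z) * jacobiTheta₂ z τ := by
  rw [jacobiTheta₂_add_left', ePi]
  ring_nf

end AppellSum

/-! ### The transformation `τ ↦ τ / (2τ + 1)` -/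

section Transformation

variable {τ u : ℂ}

lemma im_two_mul_add_one_pos (hτ : 0 < τ.im) : 0 < (2 * τ + 1).im := by simpa using hτ

lemma two_mul_add_one_ne_zero (hτ : 0 < τ.im) : 2 * τ + 1 ≠ 0 :=
  ne_zero_of_im_pos (im_two_mul_add_one_pos hτ)

lemma im_div_two_mul_add_one_pos (hτ : 0 < τ.im) : 0 < (τ / (2 * τ + 1)).im := by
  have him : (τ / (2 * τ + 1)).im = τ.im / normSq (2 * τ + 1) := by
    rw [div_im, ← sub_div]
    congr 1
    simp
    ring
  rw [him]
  exact div_pos hτ (normSq_pos.2 (two_mul_add_one_ne_zero hτ))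

lemma div_two_mul_add_one_ne (hτ : 0 < τ.im) (hu : ∀ m n : ℤ, u ≠ m * τ + n) (m n : ℤ) :
    u / (2 * τ + 1) ≠ m * (τ / (2 * τ + 1)) + n := by
  have hd := two_mul_add_one_ne_zero hτ
  intro h
  refine hu (m + 2 * n) n ?_
  field_simp at h
  push_cast
  linear_combination h

lemma one_div_neg_I_mul_div_two_mul_add_one_cpow_half (hτ : 0 < τ.im) :
    1 / (-I * (τ / (2 * τ + 1))) ^ (1 / 2 : ℂ) =
      (2 * τ + 1) ^ (1 / 2 : ℂ) * (1 / (-I * τ) ^ (1 / 2 : ℂ)) := by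
  have hd := two_mul_add_one_ne_zero hτ
  have hτ' := im_div_two_mul_add_one_pos hτ
  have hmul : (2 * τ + 1) * (τ / (2 * τ + 1)) = τ := mul_div_cancel₀ _ hd
  have hroot : τ ^ (1 / 2 : ℂ) = (2 * τ + 1) ^ (1 / 2 : ℂ) * (τ / (2 * τ + 1)) ^ (1 / 2 : ℂ) := by
    rw [← mul_cpow_of_im_pos (im_two_mul_add_one_pos hτ) hτ' (by rwa [hmul]), hmul]
  rw [neg_I_mul_cpow_half hτ, neg_I_mul_cpow_half hτ', hroot, mul_left_comm (ePi _),
    mul_one_div, div_mul_cancel_left₀ (cpow_half_ne_zero hd), one_div]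

lemma cpow_half_div_self (x : ℂ) : x ^ (1 / 2 : ℂ) / x = x ^ (-(1 / 2) : ℂ) := by
  rcases eq_or_ne x 0 with rfl | hx
  · simp
  · rw [cpow_neg, div_eq_iff hx, inv_mul_eq_div, eq_div_iff (cpow_half_ne_zero hx), ← sq,
      cpow_half_sq]

lemma jacobiTheta₂_div_two_mul_add_one (hτ : 0 < τ.im) (z : ℂ) :
    jacobiTheta₂ (z / (2 * τ + 1)) (τ / (2 * τ + 1)) =
      (2 * τ + 1) ^ (1 / 2 : ℂ) * ePi (2 * z ^ 2 / (2 * τ + 1)) * jacobiTheta₂ z τ := by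
  have hd := two_mul_add_one_ne_zero hτ
  have hτ₀ := ne_zero_of_im_pos hτ
  have hexp : cexp (-Real.pi * I * (z / (2 * τ + 1)) ^ 2 / (τ / (2 * τ + 1))) =
      ePi (2 * z ^ 2 / (2 * τ + 1)) * cexp (-Real.pi * I * z ^ 2 / τ) := by
    rw [ePi, ← Complex.exp_add]
    congr 1
    field_simp
    ring
  have hperiod : -1 / τ = -1 / (τ / (2 * τ + 1)) + 2 := by
    field_simp
    ring
  rw [jacobiTheta₂_functional_equation, jacobiTheta₂_functional_equation z τ, hexp, hperiod,
    jacobiTheta₂_add_right, div_div_div_cancel_right₀ hd,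
    one_div_neg_I_mul_div_two_mul_add_one_cpow_half hτ]
  ring

lemma ePi_two_mul_sub_sq_div (u z d : ℂ) : ePi (2 * (z - u) ^ 2 / d) =
    ePi ((2 * u ^ 2 - 4 * u * z) / d) * ePi (2 * z ^ 2 / d) := by
  rw [← ePi_add]
  ring_nf

/-- The image of `appellSum u z τ` under `(u, z, τ) ↦ (u, z, τ) / (2τ + 1)`, with the automorphy
factor of a Jacobi form of weight one. -/
noncomputable def transformedAppellSum (u z τ : ℂ) : ℂ :=
  ePi ((2 * u ^ 2 - 4 * u * z) / (2 * τ + 1)) / (2 * τ + 1) *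
    appellSum (u / (2 * τ + 1)) (z / (2 * τ + 1)) (τ / (2 * τ + 1))

lemma differentiable_transformedAppellSum (hτ : 0 < τ.im) (u : ℂ) :
    Differentiable ℂ fun z => transformedAppellSum u z τ := by
  have hA := differentiable_appellSum (im_div_two_mul_add_one_pos hτ) (u / (2 * τ + 1))
  have hexp : Differentiable ℂ fun z => ePi ((2 * u ^ 2 - 4 * u * z) / (2 * τ + 1)) :=
    differentiable_ePi.comp (by fun_prop)
  exact (hexp.div_const _).mul
    (hA.comp (g := fun z => appellSum (u / (2 * τ + 1)) z (τ / (2 * τ + 1))) (by fun_prop))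

lemma transformedAppellSum_sub_mul_transformedAppellSum_add (hτ : 0 < τ.im)
    (hu : ∀ m n : ℤ, u ≠ m * τ + n) (z : ℂ) :
    transformedAppellSum u z τ - ePi (2 * u) * transformedAppellSum u (z + τ) τ =
      (2 * τ + 1) ^ (-(1 / 2) : ℂ) * ePi (2 * (z - u) ^ 2 / (2 * τ + 1)) * jacobiTheta₂ z τ := by
  have hd := two_mul_add_one_ne_zero hτ
  have hA := appellSum_sub_mul_appellSum_add (im_div_two_mul_add_one_pos hτ)
    (div_two_mul_add_one_ne hτ hu) (z / (2 * τ + 1))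
  rw [jacobiTheta₂_div_two_mul_add_one hτ] at hA
  have hfactor : ePi (2 * u) * ePi ((2 * u ^ 2 - 4 * u * (z + τ)) / (2 * τ + 1)) =
      ePi ((2 * u ^ 2 - 4 * u * z) / (2 * τ + 1)) * ePi (2 * (u / (2 * τ + 1))) := by
    rw [← ePi_add, ← ePi_add]
    congr 1
    field_simp
    ring
  rw [transformedAppellSum, transformedAppellSum, add_div z, ePi_two_mul_sub_sq_div,
    ← cpow_half_div_self]
  linear_combination ePi ((2 * u ^ 2 - 4 * u * z) / (2 * τ + 1)) / (2 * τ + 1) * hA -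
    appellSum (u / (2 * τ + 1)) (z / (2 * τ + 1) + τ / (2 * τ + 1)) (τ / (2 * τ + 1)) /
      (2 * τ + 1) * hfactor

-- Since `1 / (2τ + 1) = 1 - 2τ'` with `τ' = τ / (2τ + 1)`, a unit shift of `z` amounts to two
-- shifts of `z / (2τ + 1)` by `-τ'`.
lemma transformedAppellSum_add_one_sub (hτ : 0 < τ.im) (hu : ∀ m n : ℤ, u ≠ m * τ + n) (z : ℂ) :
    transformedAppellSum u (z + 1) τ - transformedAppellSum u z τ =
      (2 * τ + 1) ^ (-(1 / 2) : ℂ) * (ePi (2 * (z - u + 1) ^ 2 / (2 * τ + 1)) -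
        I * ePi (2 * (z - u + 1 / 2) ^ 2 / (2 * τ + 1))) * jacobiTheta₂ z τ := by
  have hd := two_mul_add_one_ne_zero hτ
  have hshift (x : ℂ) := appellSum_sub_mul_appellSum_add (im_div_two_mul_add_one_pos hτ)
    (div_two_mul_add_one_ne hτ hu) (x / (2 * τ + 1))
  have hunit : (z - 2 * τ) / (2 * τ + 1) + 1 = (z + 1) / (2 * τ + 1) := by
    field_simp
    ring
  have h₁ := hshift (z - 2 * τ)
  rw [← add_div, show z - 2 * τ + τ = z - τ by ring, ← appellSum_add_one _ (_ / _),
    ← jacobiTheta₂_add_left (_ / _), hunit, jacobiTheta₂_div_two_mul_add_one hτ,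
    jacobiTheta₂_add_left] at h₁
  have h₂ := hshift (z - τ)
  rw [← add_div, sub_add_cancel, jacobiTheta₂_div_two_mul_add_one hτ] at h₂
  have hθ := jacobiTheta₂_add_self (z - τ) τ
  rw [sub_add_cancel] at hθ
  rw [hθ] at h₁
  set E := ePi ((2 * u ^ 2 - 4 * u * (z + 1)) / (2 * τ + 1)) with hE
  set q := ePi (2 * (u / (2 * τ + 1))) with hq
  have hfactor : ePi ((2 * u ^ 2 - 4 * u * z) / (2 * τ + 1)) = E * q ^ 2 := by
    rw [hE, hq, ePi_pow, ← ePi_add]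
    push_cast
    ring_nf
  have hsquare : I * ePi (2 * (z - u + 1 / 2) ^ 2 / (2 * τ + 1)) * ePi (-τ - 2 * (z - τ)) =
      -(E * q * ePi (2 * (z - τ) ^ 2 / (2 * τ + 1))) := by
    rw [hE, hq, ← ePi_half, ← ePi_add, ← ePi_add, ← ePi_add, ← ePi_add, ← ePi_add_one]
    congr 1
    field_simp
    ring
  rw [transformedAppellSum, transformedAppellSum, hfactor, ← add_sub_right_comm z 1 u,
    ePi_two_mul_sub_sq_div, ← cpow_half_div_self, hθ]
  linear_combination E / (2 * τ + 1) * (h₁ + q * h₂) +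
    (2 * τ + 1) ^ (1 / 2 : ℂ) / (2 * τ + 1) * jacobiTheta₂ (z - τ) τ * hsquare

theorem appellSum_sub_transformedAppellSum (hτ : 0 < τ.im) (hu : ∀ m n : ℤ, u ≠ m * τ + n)
    (z : ℂ) :
    appellSum u z τ - transformedAppellSum u z τ = jacobiTheta₂ z τ * mordellPeriod τ (z - u) := by
  refine sub_eq_zero.1 (eq_zero_of_quasiperiodic hτ hu
    (f := fun z => appellSum u z τ - transformedAppellSum u z τ -
      jacobiTheta₂ z τ * mordellPeriod τ (z - u)) ?_ (fun z => ?_) (fun z => ?_) z)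
  · exact ((differentiable_appellSum hτ u).sub (differentiable_transformedAppellSum hτ u)).sub
      (Differentiable.mul (fun z => differentiableAt_jacobiTheta₂_fst z hτ)
        ((differentiable_mordellPeriod hτ).comp (by fun_prop)))
  · have hB := transformedAppellSum_add_one_sub hτ hu z
    have hm := mordellPeriod_add_one_sub hτ (z - u)
    rw [appellSum_add_one, jacobiTheta₂_add_left, add_sub_right_comm]
    linear_combination -hB - jacobiTheta₂ z τ * hm
  · have hA := appellSum_sub_mul_appellSum_add hτ hu z
    have hB := transformedAppellSum_sub_mul_transformedAppellSum_add hτ hu z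
    have hm := mordellPeriod_sub_mul_mordellPeriod_add hτ (z - u)
    have hfactor : ePi (-2 * (z - u) - τ) = ePi (2 * u) * ePi (-τ - 2 * z) := by
      rw [← ePi_add]
      ring_nf
    rw [hfactor] at hm
    rw [jacobiTheta₂_add_self, add_sub_right_comm]
    linear_combination hA - hB - jacobiTheta₂ z τ * hm

end Transformation

/-! ### Zwegers' `μ`-function -/

section Zwegers

variable {τ : ℂ}

lemma jacobiThetaZw_eq (v τ : ℂ) :
    jacobiThetaZw v τ = ePi (v + 1 / 2 + τ / 4) * jacobiTheta₂ (v + τ / 2 + 1 / 2) τ := by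
  rw [jacobiThetaZw, jacobiTheta₂, ← tsum_mul_left]
  refine tsum_congr fun n => ?_
  rw [jacobiTheta₂_term_eq_ePi, ← ePi_add, ePi, ← Complex.exp_add]
  ring_nf

lemma muZw_eq (u v τ : ℂ) :
    muZw u v τ = ePi (u - v - 1 / 2 - τ / 4) *
      (appellSum u (v + τ / 2 + 1 / 2) τ / jacobiTheta₂ (v + τ / 2 + 1 / 2) τ) := by
  have hsum : ∑' n : ℤ, (-1 : ℂ) ^ n * cexp (2 * Real.pi * I * n * v) *
      cexp (Real.pi * I * τ * n * (n + 1)) /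
        (1 - cexp (2 * Real.pi * I * u) * cexp (2 * Real.pi * I * n * τ)) =
      appellSum u (v + τ / 2 + 1 / 2) τ := by
    refine tsum_congr fun n => ?_
    rw [jacobiTheta₂_term_eq_ePi, ← ePi_intCast, ePi, ePi, ePi, ← Complex.exp_add,
      ← Complex.exp_add, ← Complex.exp_add]
    ring_nf
  have hexp : cexp (Real.pi * I * u) =
      ePi (u - v - 1 / 2 - τ / 4) * ePi (v + 1 / 2 + τ / 4) := by
    rw [← ePi_add, ePi]
    ring_nf
  rw [muZw, hsum, jacobiThetaZw_eq, hexp]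
  field_simp [ePi_ne_zero]

lemma V11_eq (τ : ℂ) : V11 τ =
    -ePi (-(9 * τ / 16)) *
      (appellSum (τ / 4 + 1 / 2) (τ + 1 / 2) τ / jacobiTheta₂ (τ + 1 / 2) τ) := by
  rw [V11, muZw_eq, add_halves, ← mul_assoc, neg_mul, ePi, ← Complex.exp_add, ePi]
  ring_nf

lemma appellSum_div_jacobiTheta₂_sub (hτ : 0 < τ.im) {u z : ℂ} (hu : ∀ m n : ℤ, u ≠ m * τ + n)
    (hz : jacobiTheta₂ z τ ≠ 0) :
    appellSum u z τ / jacobiTheta₂ z τ -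
      (2 * τ + 1) ^ (-(1 / 2) : ℂ) * ePi (2 * (z - u) ^ 2 / (2 * τ + 1)) *
        (appellSum (u / (2 * τ + 1)) (z / (2 * τ + 1)) (τ / (2 * τ + 1)) /
          jacobiTheta₂ (z / (2 * τ + 1)) (τ / (2 * τ + 1))) = mordellPeriod τ (z - u) := by
  have hd := two_mul_add_one_ne_zero hτ
  have h := appellSum_sub_transformedAppellSum hτ hu z
  rw [← mul_right_inj' hz, ← h, jacobiTheta₂_div_two_mul_add_one hτ,
    ePi_two_mul_sub_sq_div, transformedAppellSum, ← cpow_half_div_self]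
  have hroot := cpow_half_ne_zero hd
  generalize (2 * τ + 1) ^ (1 / 2 : ℂ) = r at hroot ⊢
  field_simp [ePi_ne_zero]

lemma V11_sub_mul_V11 (hτ : 0 < τ.im) :
    V11 τ - (2 * τ + 1) ^ (-(1 / 2) : ℂ) * V11 (τ / (2 * τ + 1)) =
      -ePi (-(9 * τ / 16)) * mordellPeriod τ (3 * τ / 4) := by
  have hd := two_mul_add_one_ne_zero hτ
  have hu (m n : ℤ) : τ / 4 + 1 / 2 + τ ≠ m * τ + n := by
    intro h
    have him : τ.im / 4 + τ.im = m * τ.im := by simpa using congrArg im h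
    have hm : (5 : ℝ) = (4 * m : ℤ) := by
      push_cast
      exact mul_right_cancel₀ hτ.ne' (by linear_combination 4 * him)
    norm_cast at hm
    omega
  have hz : jacobiTheta₂ (τ + 1 / 2 + τ) τ ≠ 0 := by
    rw [jacobiTheta₂_add_self, add_comm τ, jacobiTheta₂_add_self]
    exact mul_ne_zero (ePi_ne_zero _) <|
      mul_ne_zero (ePi_ne_zero _) (jacobiTheta₂_one_half_ne_zero hτ)
  have h := appellSum_div_jacobiTheta₂_sub hτ hu hz
  have hdiv₁ : (τ / 4 + 1 / 2 + τ) / (2 * τ + 1) = τ / (2 * τ + 1) / 4 + 1 / 2 := by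
    linear_combination mul_inv_cancel₀ hd / 2
  have hdiv₂ : (τ + 1 / 2 + τ) / (2 * τ + 1) = τ / (2 * τ + 1) + 1 / 2 := by
    linear_combination mul_inv_cancel₀ hd / 2
  have hfactor : ePi (-(9 * (τ / (2 * τ + 1)) / 16)) =
      ePi (-(9 * τ / 16)) * ePi (2 * (3 * τ / 4) ^ 2 / (2 * τ + 1)) := by
    rw [← ePi_add]
    congr 1
    linear_combination (-(9 * τ / 16)) * mul_inv_cancel₀ hd
  rw [appellSum_add_add, jacobiTheta₂_add_self, mul_div_mul_left _ _ (ePi_ne_zero _), hdiv₁, hdiv₂,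
    show τ + 1 / 2 + τ - (τ / 4 + 1 / 2 + τ) = 3 * τ / 4 by ring] at h
  rw [V11_eq, V11_eq, hfactor]
  linear_combination (-ePi (-(9 * τ / 16))) * h

lemma ePi_mul_mordellPeriod (τ : ℂ) :
    ePi (-(9 * τ / 16)) * mordellPeriod τ (3 * τ / 4) =
      ePi (-(11 / 32)) * ePi (-((τ + 1 / 2) / 16)) / (2 * (√2 : ℝ)) *
        (mordellIntegral (τ + 1 / 2) ((τ + 1 / 2) / 4 - 3 / 8) -
          mordellIntegral (τ + 1 / 2) ((τ + 1 / 2) / 4 + 1 / 8)) := by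
  have hσ : 3 * τ / 4 - (τ + 1 / 2) / 2 = (τ + 1 / 2) / 4 - 3 / 8 := by ring
  have hσ' : 3 * τ / 4 + 1 / 2 - (τ + 1 / 2) / 2 = (τ + 1 / 2) / 4 + 1 / 8 := by ring
  have h₁ : ePi (-(9 * τ / 16)) * ePi (-(1 / 4)) * ePi (3 * τ / 4 - (τ + 1 / 2) / 4) =
      ePi (-(11 / 32)) * ePi (-((τ + 1 / 2) / 16)) := by
    rw [← ePi_add, ← ePi_add, ← ePi_add]
    ring_nf
  have h₂ : I * ePi (3 * τ / 4 + 1 / 2 - (τ + 1 / 2) / 4) = -ePi (3 * τ / 4 - (τ + 1 / 2) / 4) := by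
    rw [← ePi_half, ← ePi_add, ← ePi_add_one]
    ring_nf
  rw [mordellPeriod, normalizedMordell, normalizedMordell, hσ, hσ', ← mul_assoc I, h₂, ← h₁]
  ring

end Zwegers

lemma integral_E1fun_div_cpow_half {τ : ℂ} (hτ : 0 < τ.im) :
    ∫ t in Ioi (0 : ℝ), E1fun ((1 / 2 + I * t) / 32) / (-I * (1 / 2 + I * t + τ)) ^ (1 / 2 : ℂ) =
      -(8 / (√2 : ℝ) ^ 3) * ePi (-(11 / 32)) * (ePi (-((τ + 1 / 2) / 16)) *
        (mordellIntegral (τ + 1 / 2) ((τ + 1 / 2) / 4 - 3 / 8) -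
          mordellIntegral (τ + 1 / 2) ((τ + 1 / 2) / 4 + 1 / 8))) := by
  have hσ := im_add_half_pos hτ
  rw [← integral_ePi_mul_etaLaplaceKernel_add hσ, ← integral_etaCubeLine_div_cpow_half hσ]
  refine integral_congr_ae (.of_forall fun t => ?_)
  simp only [E1fun, etaCubeLine]
  have harg : 8 * ((1 / 2 + I * (t : ℂ)) / 32) = (1 / 2 + I * t) / 4 := by ring
  have hroot : -I * (1 / 2 + I * (t : ℂ) + τ) = t - I * (τ + 1 / 2) := by
    linear_combination (-(t : ℂ)) * I_sq
  rw [harg, hroot]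

/-- Theorem 1.2(i) for `(m,n) = (1,1)` on ℍ:
`V₁₁(τ) − (2τ+1)^{−1/2} V₁₁(τ/(2τ+1)) = −(i/8)∫_{1/2}^{i∞} E₁(u/32)/√(−i(u+τ)) du`. -/
theorem V11_quantum_transform :
    ∀ τ : ℂ, 0 < τ.im →
      V11 τ - (2 * τ + 1) ^ (-(1/2 : ℂ)) * V11 (τ / (2 * τ + 1)) =
        -(I/8) * (I * ∫ t in Set.Ioi (0 : ℝ),
          E1fun ((1/2 + I * t) / 32) / ((-I * (1/2 + I * t + τ)) ^ ((1 : ℂ)/2))) := by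
  intro τ hτ
  have hsqrt : ((√2 : ℝ) : ℂ) ^ 2 = 2 := by
    rw [← ofReal_pow, Real.sq_sqrt zero_le_two, ofReal_ofNat]
  have hsqrt₀ : ((√2 : ℝ) : ℂ) ≠ 0 := ofReal_ne_zero.2 (by positivity)
  rw [V11_sub_mul_V11 hτ, neg_mul, ePi_mul_mordellPeriod, integral_E1fun_div_cpow_half hτ]
  field_simp
  rw [hsqrt, I_sq]
  ring
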